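/- arXiv:1309.7842 — 11 statements merged into one kernel-verified Lean document; each statement's English description precedes it below -/
import Mathlib

section
/- Let p be an odd prime, q = p^m, and n ≥ 1. Every difference balanced function f : L∖{0} → K is balanced or an affine shift of a balanced function: there exists c ∈ K such that |{x ∈ L∖{0} : f(x) = c}| = q^{n−1} − 1 and |{x ∈ L∖{0} : f(x) = b}| = q^{n−1} for every b ∈ K with b ≠ c. -/
/-- A function `f : L∖{0} → K` is balanced if `0` has exactly `q^(n-1) - 1` preimages
among nonzero elements and every `b ≠ 0` has exactly `q^(n-1)` preimages. -/
def IsBalanced {K L : Type*} [Field K] [Field L] (q n : ℕ) (f : L → K) : Prop :=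
  Nat.card {x : L | x ≠ 0 ∧ f x = 0} = q ^ (n - 1) - 1 ∧
    ∀ b : K, b ≠ 0 → Nat.card {x : L | x ≠ 0 ∧ f x = b} = q ^ (n - 1)

/-- A function `f : L∖{0} → K` is difference balanced if `x ↦ f (a*x) - f x` is balanced
for every `a ≠ 0, 1`. -/
def IsDiffBalanced {K L : Type*} [Field K] [Field L] (q n : ℕ) (f : L → K) : Prop :=
  ∀ a : L, a ≠ 0 → a ≠ 1 → IsBalanced q n (fun x => f (a * x) - f x)

/-!
View `f` as a function on the group `Lˣ`, and let `N b` be the size of its fibre over `b`.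
The pairs `(u, v)` with `f u = f v`, grouped by the common value, number `∑ b, N b ^ 2`; grouped
by the quotient `v / u`, their number is known from the zero fibres of the differences alone.
Together with `∑ b, N b = |L| - 1` this shows that the integers `N b - q ^ (n - 1)` have sum `-1`
and sum of squares `1`, so one of them is `-1` and all others vanish.
-/

open Finset

section Fibers

variable {ι α : Type*} [Fintype ι] [Fintype α]

lemma exists_forall_ne_eq_zero_of_sum_sq_eq_one (e : ι → ℤ) (he : ∑ i, e i ^ 2 = 1) :
    ∃ c, ∀ i, i ≠ c → e i = 0 := by
  classical
  obtain ⟨c, -, hc⟩ := exists_ne_zero_of_sum_ne_zero (he.trans_ne one_ne_zero)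
  refine ⟨c, fun i hi => ?_⟩
  have pair_le_one : e c ^ 2 + e i ^ 2 ≤ 1 := by
    rw [← he, ← sum_pair (f := fun j => e j ^ 2) hi.symm]
    exact sum_le_univ_sum_of_nonneg fun j => sq_nonneg (e j)
  have one_le_sq : 1 ≤ e c ^ 2 := (sq_nonneg (e c)).lt_of_ne' hc
  exact pow_eq_zero_iff two_ne_zero |>.mp (by linarith [sq_nonneg (e i)])

variable [DecidableEq α] (g : ι → α)

lemma sum_card_fiber : ∑ b, #{x | g x = b} = Fintype.card ι :=
  (card_eq_sum_card_fiberwise fun _ _ => mem_coe.mpr (mem_univ _)).symm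

lemma sum_card_fiber_sq : ∑ b, #{x | g x = b} ^ 2 = ∑ x, #{y | g y = g x} := by
  simp only [sq, ← smul_eq_mul, ← sum_const]
  exact sum_fiberwise' univ g fun b => #{y | g y = b}

lemma sum_card_fiber_sub_sq {R : Type*} [CommRing R] (k : R) :
    ∑ b, ((#{x | g x = b} : R) - k) ^ 2 =
      ∑ x, (#{y | g y = g x} : R) - 2 * k * Fintype.card ι + Fintype.card α * k ^ 2 := by
  rw [← sum_card_fiber g, ← Nat.cast_sum, ← sum_card_fiber_sq]
  simp only [sub_sq, sum_add_distrib, sum_sub_distrib, sum_const, card_univ, nsmul_eq_mul,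
    Nat.cast_sum, Nat.cast_pow, mul_sum]
  simp only [mul_right_comm _ _ k, mul_comm _ k]

end Fibers

section Group

variable {G α : Type*} [Group G] [Fintype G] [DecidableEq α] (g : G → α)

lemma sum_card_eq_sum_card_mul_left_eq :
    ∑ x, #{y | g y = g x} = ∑ a, #{x | g (a * x) = g x} :=
  calc ∑ x, #{y | g y = g x}
    _ = ∑ x, #{a | g (a * x) = g x} := sum_congr rfl fun x _ => by
      simp only [card_filter]
      exact (Equiv.sum_comp (Equiv.mulRight x) fun y => if g y = g x then 1 else 0).symm
    _ = ∑ a, #{x | g (a * x) = g x} :=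
      sum_card_bipartiteAbove_eq_sum_card_bipartiteBelow fun x a => g (a * x) = g x

variable {g} {k : ℕ}

lemma sum_card_of_forall_card_mul_left_eq (hg : ∀ a ≠ 1, #{x | g (a * x) = g x} = k) :
    ∑ x, #{y | g y = g x} = Fintype.card G + (Fintype.card G - 1) * k := by
  classical
  rw [sum_card_eq_sum_card_mul_left_eq, ← add_sum_erase _ _ (mem_univ 1),
    sum_congr rfl fun a ha => hg a (ne_of_mem_erase ha)]
  simp

lemma exists_card_fiber_eq_of_forall_card_mul_left_eq [Fintype α]
    (hcard : Fintype.card G + 1 = Fintype.card α * (k + 1))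
    (hg : ∀ a ≠ 1, #{x | g (a * x) = g x} = k) :
    ∃ c, #{x | g x = c} = k ∧ ∀ b ≠ c, #{x | g x = b} = k + 1 := by
  set e : α → ℤ := fun b => #{x | g x = b} - (k + 1) with he
  zify at hcard
  have sum_e : ∑ b, e b = -1 := by
    simp only [he, sum_sub_distrib, ← Nat.cast_sum, sum_card_fiber, sum_const, card_univ,
      nsmul_eq_mul]
    linarith
  have sum_e_sq : ∑ b, e b ^ 2 = 1 := by
    have pairs := congrArg (Nat.cast : ℕ → ℤ) (sum_card_of_forall_card_mul_left_eq hg)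
    push_cast [Nat.cast_sub Fintype.card_pos] at pairs
    rw [sum_card_fiber_sub_sq, pairs]
    linear_combination (-k - 1 : ℤ) * hcard
  obtain ⟨c, e_eq_zero⟩ := exists_forall_ne_eq_zero_of_sum_sq_eq_one e sum_e_sq
  rw [Fintype.sum_eq_single c e_eq_zero] at sum_e
  exact ⟨c, by lia, fun b hb => by have := e_eq_zero b hb; lia⟩

end Group

lemma natCard_ne_zero_and {M : Type*} [GroupWithZero M] [Fintype Mˣ] (P : M → Prop)
    [DecidablePred P] : Nat.card {x : M | x ≠ 0 ∧ P x} = #{u : Mˣ | P u} := by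
  rw [← Fintype.card_subtype, ← Nat.card_eq_fintype_card]
  exact Nat.card_congr <| (Equiv.subtypeSubtypeEquivSubtypeInter (· ≠ 0) P).symm.trans
    (unitsEquivNeZero.subtypeEquiv fun _ => Iff.rfl).symm

theorem stmt_0_general {M α : Type*} [GroupWithZero M] [Finite M] {k : ℕ} (f : M → α)
    (hcard : Nat.card M = Nat.card α * k)
    (hf : ∀ a : M, a ≠ 0 → a ≠ 1 → Nat.card {x : M | x ≠ 0 ∧ f (a * x) = f x} = k - 1) :
    ∃ c, Nat.card {x : M | x ≠ 0 ∧ f x = c} = k - 1 ∧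
      ∀ b, b ≠ c → Nat.card {x : M | x ≠ 0 ∧ f x = b} = k := by
  classical
  have card_mul_ne_zero : Nat.card α * k ≠ 0 := hcard ▸ Nat.card_pos.ne'
  have := Nat.finite_of_card_ne_zero (left_ne_zero_of_mul card_mul_ne_zero)
  have := Fintype.ofFinite α
  have := Fintype.ofFinite Mˣ
  obtain ⟨l, rfl⟩ := Nat.exists_eq_add_one_of_ne_zero (right_ne_zero_of_mul card_mul_ne_zero)
  simp only [natCard_ne_zero_and, Nat.add_sub_cancel] at hf ⊢
  refine exists_card_fiber_eq_of_forall_card_mul_left_eq (g := fun u : Mˣ => f u) ?_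
    fun a ha => hf a a.ne_zero (mt Units.val_eq_one.mp ha)
  rw [← Nat.card_eq_fintype_card, ← Nat.card_eq_fintype_card, ← Nat.card_eq_card_units_add_one,
    hcard]

/-- Every difference balanced function `f : L∖{0} → K` is balanced or an affine
shift of a balanced function: there is `c ∈ K` attaining `q^(n-1) - 1` preimages,
and all other values attain exactly `q^(n-1)` preimages. -/
theorem stmt_0 {K L : Type*} [Field K] [Field L] [Algebra K L] [Fintype K] [Fintype L]
    (p m n q : ℕ) (hp : p.Prime) (hodd : Odd p) (hm : 1 ≤ m) (hn : 1 ≤ n)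
    (hq : q = p ^ m) (hK : Fintype.card K = q) (hL : Fintype.card L = q ^ n)
    (f : L → K) (hf : IsDiffBalanced q n f) :
    ∃ c : K, Nat.card {x : L | x ≠ 0 ∧ f x = c} = q ^ (n - 1) - 1 ∧
      ∀ b : K, b ≠ c → Nat.card {x : L | x ≠ 0 ∧ f x = b} = q ^ (n - 1) :=
  stmt_0_general f (by simp [hK, hL, ← pow_succ', Nat.sub_add_cancel hn])
    fun a ha₀ ha₁ => by simpa only [sub_eq_zero] using (hf a ha₀ ha₁).1
end

section
/- Let p be an odd prime, q = p^m, and n ≥ 1. If f : L∖{0} → K is difference balanced and, for b ∈ K, d_b := |{x ∈ L∖{0} : f(x) = b}|, then the sum over all ordered pairs (b₁, b₂) ∈ K × K with b₁ ≠ b₂ of (d_{b₁} − d_{b₂})² equals 2(q − 1) (equivalently, the sum over unordered pairs equals q − 1). -/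
/-! Restricted to `Lˣ`, a difference balanced function agrees with each of its nontrivial
translates at exactly `q ^ (n - 1) - 1` points. The pairs `(x, y)` of units with `f x = f y` can be
counted fibrewise, giving `∑ d_b ^ 2`, or by the ratio `x / y`, giving the total number of
agreements of `f` with its translates. So `∑ d_b ^ 2` is determined, `∑ d_b = |Lˣ|` always holds,
and these two moments determine `∑ (d_{b₁} - d_{b₂}) ^ 2`. -/

lemma sum_sum_sub_sq {ι R : Type*} [CommRing R] (s : Finset ι) (d : ι → R) :
    ∑ i ∈ s, ∑ j ∈ s, (d i - d j) ^ 2 =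
      2 * (s.card * ∑ i ∈ s, d i ^ 2 - (∑ i ∈ s, d i) ^ 2) := by
  simp only [sub_sq, Finset.sum_add_distrib, Finset.sum_sub_distrib, ← Finset.mul_sum,
    ← Finset.sum_mul, Finset.sum_const, nsmul_eq_mul]
  ring

section Fibers

variable {ι α : Type*} [Finite ι] [Fintype α]

lemma sum_natCard_fiber (g : ι → α) : ∑ b, Nat.card {x | g x = b} = Nat.card ι := by
  rw [← Nat.card_sigma]
  exact Nat.card_congr (Equiv.sigmaFiberEquiv g)

lemma sum_natCard_fiber_sq_eq_natCard_pairs (g : ι → α) :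
    ∑ b, Nat.card {x | g x = b} ^ 2 = Nat.card {xy : ι × ι | g xy.1 = g xy.2} := by
  simp only [sq, ← Nat.card_prod, ← Nat.card_sigma]
  exact Nat.card_congr
    { toFun := fun ⟨_, x, y⟩ => ⟨(x, y), x.2.trans y.2.symm⟩
      invFun := fun ⟨(x, y), hxy⟩ => ⟨g y, ⟨x, hxy⟩, ⟨y, rfl⟩⟩
      left_inv := by rintro ⟨_, x, y, rfl⟩; rfl
      right_inv := fun _ => rfl }

end Fibers

lemma natCard_pairs_eq_sum_natCard_translates {G α : Type*} [Group G] [Fintype G] (g : G → α) :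
    Nat.card {xy : G × G | g xy.1 = g xy.2} = ∑ a, Nat.card {x | g (a * x) = g x} := by
  rw [← Nat.card_sigma]
  exact Nat.card_congr
    { toFun := fun ⟨(x, y), hxy⟩ => ⟨x / y, y, by simpa using hxy⟩
      invFun := fun ⟨a, x, hx⟩ => ⟨(a * x, x), hx⟩
      left_inv := fun _ => by simp
      right_inv := by rintro ⟨a, x, hx⟩; ext <;> simp }

/-- A function on a group is zero-difference balanced with parameter `l` if it agrees with each of
its nontrivial left translates at exactly `l` points. When `g` takes values in an additive group,
these are the zeros of the difference `g (a * x) - g x`. -/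
def IsZeroDiffBalanced {G α : Type*} [Group G] (g : G → α) (l : ℕ) : Prop :=
  ∀ a : G, a ≠ 1 → Nat.card {x | g (a * x) = g x} = l

namespace IsZeroDiffBalanced

variable {G α : Type*} [Group G] [Finite G] [Fintype α] {g : G → α} {l : ℕ}

lemma sum_natCard_fiber_sq (hg : IsZeroDiffBalanced g l) :
    ∑ b, Nat.card {x | g x = b} ^ 2 = Nat.card G + (Nat.card G - 1) * l := by
  classical
  have := Fintype.ofFinite G
  have hone : Nat.card {x | g (1 * x) = g x} = Nat.card G := by
    simp only [one_mul, Set.ofPred_true, Nat.card_univ]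
  calc ∑ b, Nat.card {x | g x = b} ^ 2
      = ∑ a, Nat.card {x | g (a * x) = g x} := by
        rw [sum_natCard_fiber_sq_eq_natCard_pairs, natCard_pairs_eq_sum_natCard_translates]
    _ = Nat.card G + ∑ a ∈ Finset.univ.erase 1, Nat.card {x | g (a * x) = g x} := by
        rw [← Finset.add_sum_erase _ _ (Finset.mem_univ 1), hone]
    _ = Nat.card G + (Nat.card G - 1) * l := by
        rw [Finset.sum_congr rfl fun a ha => hg a (Finset.ne_of_mem_erase ha), Finset.sum_const,
          Finset.card_erase_of_mem (Finset.mem_univ 1), Finset.card_univ, smul_eq_mul,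
          Nat.card_eq_fintype_card]

lemma sum_sum_natCard_fiber_sub_sq (hg : IsZeroDiffBalanced g l) :
    ∑ b₁, ∑ b₂, ((Nat.card {x | g x = b₁} : ℤ) - Nat.card {x | g x = b₂}) ^ 2 =
      2 * (Fintype.card α * (Nat.card G + (Nat.card G - 1) * l) - (Nat.card G : ℤ) ^ 2) := by
  have hsq : ∑ b, (Nat.card {x | g x = b} : ℤ) ^ 2 = Nat.card G + (Nat.card G - 1) * l := by
    rw [← Nat.cast_pred Nat.card_pos]
    exact_mod_cast hg.sum_natCard_fiber_sq
  have hsum : ∑ b, (Nat.card {x | g x = b} : ℤ) = Nat.card G := by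
    exact_mod_cast sum_natCard_fiber g
  rw [sum_sum_sub_sq, hsq, hsum, Finset.card_univ]

end IsZeroDiffBalanced

lemma natCard_ne_zero_and_eq_natCard_units {L : Type*} [GroupWithZero L] (P : L → Prop) :
    Nat.card {x : L | x ≠ 0 ∧ P x} = Nat.card {u : Lˣ | P u} :=
  Nat.card_congr <| .symm <| (unitsEquivNeZero.subtypeEquiv fun _ => Iff.rfl).trans <|
    Equiv.subtypeSubtypeEquivSubtypeInter (· ≠ 0) P

lemma IsDiffBalanced.isZeroDiffBalanced {K L : Type*} [Field K] [Field L] {q n : ℕ} {f : L → K}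
    (hf : IsDiffBalanced q n f) :
    IsZeroDiffBalanced (fun u : Lˣ => f u) (q ^ (n - 1) - 1) := by
  intro a ha
  simpa only [sub_eq_zero, Units.val_mul,
    natCard_ne_zero_and_eq_natCard_units fun x => f (a * x) = f x] using
    (hf a a.ne_zero (mt Units.val_eq_one.mp ha)).1

theorem stmt_2_general {K L : Type*} [Fintype K] [DecidableEq K] [GroupWithZero L] [Finite L]
    {n : ℕ} (hL : Nat.card L = Fintype.card K ^ n) (f : L → K)
    (hf : IsZeroDiffBalanced (fun u : Lˣ => f u) (Fintype.card K ^ (n - 1) - 1)) :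
    ∑ b₁ : K, ∑ b₂ : K,
        (if b₁ ≠ b₂ then
          ((Nat.card {x : L | x ≠ 0 ∧ f x = b₁} : ℤ) -
            (Nat.card {x : L | x ≠ 0 ∧ f x = b₂} : ℤ)) ^ 2
        else 0) = 2 * ((Fintype.card K : ℤ) - 1) := by
  have hdiag (d : K → ℤ) (b₁ b₂ : K) :
      (if b₁ ≠ b₂ then (d b₁ - d b₂) ^ 2 else 0) = (d b₁ - d b₂) ^ 2 := by
    rw [ite_eq_left_iff, not_not]
    rintro rfl
    simp
  have hn : n ≠ 0 := by
    rintro rfl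
    exact Finite.one_lt_card.ne' (hL.trans (pow_zero _))
  have hq : 0 < Fintype.card K := Fintype.card_pos_iff.mpr ⟨f 0⟩
  have hunits : (Nat.card Lˣ : ℤ) = Fintype.card K * Fintype.card K ^ (n - 1) - 1 := by
    rw [Nat.card_units, hL, Nat.cast_pred (pow_pos hq n), Nat.cast_pow, mul_pow_sub_one hn]
  simp only [natCard_ne_zero_and_eq_natCard_units fun x => f x = _,
    hdiag fun b => (Nat.card {u : Lˣ | f u = b} : ℤ)]
  rw [hf.sum_sum_natCard_fiber_sub_sq, hunits, Nat.cast_pred (pow_pos hq _), Nat.cast_pow]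
  ring

/-- If `f` is difference balanced and `d_b` is the number of nonzero preimages of `b`,
then the sum over ordered pairs `(b₁, b₂)` with `b₁ ≠ b₂` of `(d_{b₁} − d_{b₂})²`
equals `2(q − 1)`. -/
theorem stmt_2 {K L : Type*} [Field K] [Field L] [Algebra K L] [Fintype K] [Fintype L]
    [DecidableEq K]
    (p m n q : ℕ) (hp : p.Prime) (hodd : Odd p) (hm : 1 ≤ m) (hn : 1 ≤ n)
    (hq : q = p ^ m) (hK : Fintype.card K = q) (hL : Fintype.card L = q ^ n)
    (f : L → K) (hf : IsDiffBalanced q n f) :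
    ∑ b₁ : K, ∑ b₂ : K,
        (if b₁ ≠ b₂ then
          ((Nat.card {x : L | x ≠ 0 ∧ f x = b₁} : ℤ) -
            (Nat.card {x : L | x ≠ 0 ∧ f x = b₂} : ℤ)) ^ 2
        else 0) = 2 * ((q : ℤ) - 1) := by
  subst hK
  exact stmt_2_general (Nat.card_eq_fintype_card.trans hL) f hf.isZeroDiffBalanced
end

section
/- Let p be an odd prime, q = p^m, and n ≥ 2. If a difference balanced function f : L∖{0} → K is d-homogeneous, then f is two-tuple balanced. -/
/-- `f` is `d`-homogeneous: `gcd(d, q−1) = 1` and `f(cx) = c^d f(x)` for all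
`c ∈ K∖{0}` and `x ∈ L∖{0}`. -/
def IsDHomogeneous {K L : Type*} [Field K] [Field L] [Algebra K L] (q d : ℕ)
    (f : L → K) : Prop :=
  Nat.Coprime d (q - 1) ∧
    ∀ c : K, c ≠ 0 → ∀ x : L, x ≠ 0 → f (algebraMap K L c * x) = c ^ d * f x

/-- `N_{b₁,b₂}(a) = |{x ∈ L∖{0} : f(x) = b₁ and f(ax) = b₂}|`. -/
noncomputable def Ntt {K L : Type*} [Field K] [Field L] (f : L → K) (a : L) (b₁ b₂ : K) : ℕ :=
  Nat.card {x : L | x ≠ 0 ∧ f x = b₁ ∧ f (a * x) = b₂}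

/-- `f` is two-tuple balanced. -/
def IsTwoTupleBalanced {K L : Type*} [Field K] [Field L] [Algebra K L] (q n : ℕ)
    (f : L → K) : Prop :=
  (∀ a : L, a ≠ 0 → (∀ c : K, algebraMap K L c ≠ a) →
      (Ntt f a 0 0 = q ^ (n - 2) - 1 ∧
        ∀ b₁ b₂ : K, ¬(b₁ = 0 ∧ b₂ = 0) → Ntt f a b₁ b₂ = q ^ (n - 2))) ∧
  (∀ c : K, c ≠ 0 → ∃ μ : K,
      (∀ x : L, x ≠ 0 → f (algebraMap K L c * x) = μ * f x) ∧
      Ntt f (algebraMap K L c) 0 0 = q ^ (n - 1) - 1 ∧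
      (∀ b₁ : K, b₁ ≠ 0 → Ntt f (algebraMap K L c) b₁ (μ * b₁) = q ^ (n - 1)) ∧
      (∀ b₁ b₂ : K, b₂ ≠ μ * b₁ → Ntt f (algebraMap K L c) b₁ b₂ = 0))

/-!
Extend `f` by `f 0 = 0`, so that being balanced means having fibres of equal size. Fix `a ∉ K`.
Since `c ↦ c ^ d` permutes `Kˣ`, homogeneity turns `f (a * x) - s * f x` with `s ≠ 0` into a
difference `f (a * x) - f (c * x)` at two distinct multiples of `x`, which is balanced. Hence `f`
and all members `f (a * x) - s * f x` of the pencil are equidistributed. The lines of `K × K`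
through a point `(b₁, b₂)` cover that point `|K| + 1` times and every other point once, so
counting the `x` for which `(f x, f (a * x))` lies on each of these lines gives the number of `x`
that hit the point. For `a ∈ K`, everything reduces to `f` itself being balanced; this follows
from `f (c * x) - f x = (c ^ d - 1) * f x` for any `c ∈ K` other than `0` and `1`, and such a `c`
exists as soon as `|K| > 2`.
-/

/-- A map between finite types is equidistributed if all its fibres have the same size
`|X| / |Y|`; the size is stated without division. -/
def IsEquidistributed {X Y : Type*} (g : X → Y) : Prop :=
  ∀ y, Nat.card Y * (g ⁻¹' {y}).ncard = Nat.card X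

open Finset in
theorem isEquidistributed_iff_card_filter {X Y : Type*} [Fintype X] [Fintype Y] [DecidableEq Y]
    {g : X → Y} :
    IsEquidistributed g ↔ ∀ y, Fintype.card Y * #{x | g x = y} = Fintype.card X := by
  have fiber (y : Y) : (g ⁻¹' {y}).ncard = #{x | g x = y} := by
    rw [← Set.ncard_coe_finset]
    congr 1
    ext x
    simp
  simp only [IsEquidistributed, Nat.card_eq_fintype_card, fiber]

theorem ncard_preimage_update {X Y : Type*} [Finite X] [DecidableEq X] [DecidableEq Y]
    (f : X → Y) (a : X) (v b : Y) :
    (Function.update f a v ⁻¹' {b}).ncard =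
      Nat.card {x | x ≠ a ∧ f x = b} + if b = v then 1 else 0 := by
  rw [Nat.card_coe_set_eq]
  split_ifs with hb
  · rw [← Set.ncard_insert_of_notMem (a := a) (by simp)]
    congr 1
    ext x
    by_cases hx : x = a <;> simp [hx, hb]
  · congr 1
    ext x
    by_cases hx : x = a <;> simp [hx, Ne.symm hb]

section Pencil

variable {K X : Type*} [Field K]

open Finset in
theorem card_add_card_mul_card_fiber_prod [Fintype K] [Fintype X] [DecidableEq K]
    (g h : X → K) (b₁ b₂ : K) :
    Fintype.card X + Fintype.card K * #{x | g x = b₁ ∧ h x = b₂} =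
      ∑ s, #{x | h x - s * g x = b₂ - s * b₁} + #{x | g x = b₁} := by
  have lines_through_point (x : X) : 1 + Fintype.card K * (if g x = b₁ ∧ h x = b₂ then 1 else 0) =
      (∑ s, if h x - s * g x = b₂ - s * b₁ then 1 else 0) + if g x = b₁ then 1 else 0 := by
    by_cases h₁ : g x = b₁
    · by_cases h₂ : h x = b₂ <;> simp [h₁, h₂, add_comm]
    · have slope (s : K) :
          h x - s * g x = b₂ - s * b₁ ↔ s = (h x - b₂) / (g x - b₁) := by
        rw [eq_div_iff (sub_ne_zero.mpr h₁)]
        constructor <;> intro on_line <;> linear_combination -on_line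
      simp [h₁, slope]
  have sum_over_points := sum_congr (rfl : (univ : Finset X) = univ) fun x _ ↦ lines_through_point x
  rw [sum_add_distrib, sum_add_distrib, ← mul_sum, sum_comm] at sum_over_points
  simpa only [← card_filter, sum_const, card_univ, smul_eq_mul, mul_one] using sum_over_points

theorem IsEquidistributed.prodMk [Finite K] [Finite X] {g h : X → K} (hg : IsEquidistributed g)
    (hgh : ∀ s, IsEquidistributed fun x ↦ h x - s * g x) :
    IsEquidistributed fun x ↦ (g x, h x) := by
  classical
  cases nonempty_fintype K
  cases nonempty_fintype X
  simp only [isEquidistributed_iff_card_filter, Prod.forall, Prod.mk.injEq, Fintype.card_prod]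
    at hg hgh ⊢
  intro b₁ b₂
  have count := congrArg (Fintype.card K * ·) (card_add_card_mul_card_fiber_prod g h b₁ b₂)
  simp only [mul_add, Finset.mul_sum, hg, hgh, Finset.sum_const, Finset.card_univ, smul_eq_mul]
    at count
  linarith

end Pencil

namespace IsBalanced

variable {K L : Type*} [Field K] [Field L] {q n : ℕ} {f g : L → K}

theorem congr (hf : IsBalanced q n f) (h : ∀ x ≠ 0, f x = g x) : IsBalanced q n g := by
  have fiber (b : K) : {x : L | x ≠ 0 ∧ f x = b} = {x | x ≠ 0 ∧ g x = b} :=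
    Set.ext fun x ↦ and_congr_right fun hx ↦ by rw [h x hx]
  simpa only [IsBalanced, fiber] using hf

theorem comp_mul_left (hf : IsBalanced q n f) {a : L} (ha : a ≠ 0) :
    IsBalanced q n fun x ↦ f (a * x) := by
  have fiber (b : K) : Nat.card {x : L | x ≠ 0 ∧ f (a * x) = b} =
      Nat.card {x : L | x ≠ 0 ∧ f x = b} :=
    Nat.card_congr <| (Equiv.mulLeft₀ a ha).subtypeEquiv fun x ↦ by simp [ha]
  simpa only [IsBalanced, fiber] using hf

theorem of_const_mul {u : K} (hu : u ≠ 0) (hf : IsBalanced q n fun x ↦ u * f x) :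
    IsBalanced q n f := by
  refine ⟨by simpa [hu] using hf.1, fun b hb ↦ ?_⟩
  simpa only [mul_right_inj' hu] using hf.2 (u * b) (mul_ne_zero hu hb)

theorem isEquidistributed_update [DecidableEq L] [Finite K] [Finite L] (hf : IsBalanced q n f)
    (hK : Nat.card K = q) (hL : Nat.card L = q ^ n) (hn : n ≠ 0) :
    IsEquidistributed (Function.update f 0 0) := by
  classical
  have hq : 0 < q := hK ▸ Nat.card_pos
  intro b
  have fiber : (Function.update f 0 0 ⁻¹' {b}).ncard = q ^ (n - 1) := by
    rw [ncard_preimage_update]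
    split_ifs with hb
    · rw [hb, hf.1, Nat.sub_add_cancel (Nat.pow_pos hq)]
    · exact hf.2 b hb
  rw [fiber, hK, hL, mul_pow_sub_one hn]

theorem natCard_fiber_pair_add_ite [Finite K] [Finite L] [DecidableEq K] (hf : IsBalanced q n f)
    (hfg : ∀ s, IsBalanced q n fun x ↦ g x - s * f x)
    (hK : Nat.card K = q) (hL : Nat.card L = q ^ n) (hn : 2 ≤ n) (b₁ b₂ : K) :
    Nat.card {x : L | x ≠ 0 ∧ f x = b₁ ∧ g x = b₂} + (if b₁ = 0 ∧ b₂ = 0 then 1 else 0) =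
      q ^ (n - 2) := by
  classical
  have hq : 0 < q := hK ▸ Nat.card_pos
  have combination (s : K) : (fun x ↦ Function.update g 0 0 x - s * Function.update f 0 0 x) =
      Function.update (fun x ↦ g x - s * f x) 0 0 := by
    ext x
    by_cases hx : x = 0 <;> simp [hx]
  have pair : (fun x ↦ (Function.update f 0 0 x, Function.update g 0 0 x)) =
      Function.update (fun x ↦ (f x, g x)) 0 0 := by
    ext x <;> by_cases hx : x = 0 <;> simp [hx]
  have equidistributed : IsEquidistributed (Function.update (fun x ↦ (f x, g x)) 0 0) :=
    pair ▸ (hf.isEquidistributed_update hK hL (by omega)).prodMk fun s ↦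
      combination s ▸ (hfg s).isEquidistributed_update hK hL (by omega)
  have count := equidistributed (b₁, b₂)
  rw [ncard_preimage_update, Nat.card_prod, hK, hL, ← sq, ← pow_mul_pow_sub q hn] at count
  simpa only [Prod.mk.injEq, Prod.mk_eq_zero] using Nat.eq_of_mul_eq_mul_left (Nat.pow_pos hq) count

end IsBalanced

theorem Ntt_eq_ite {K L : Type*} [Field K] [Field L] [DecidableEq K] {f : L → K} {a : L} {μ : K}
    (h : ∀ x ≠ 0, f (a * x) = μ * f x) (b₁ b₂ : K) :
    Ntt f a b₁ b₂ = if b₂ = μ * b₁ then Nat.card {x : L | x ≠ 0 ∧ f x = b₁} else 0 := by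
  have fiber : {x : L | x ≠ 0 ∧ f x = b₁ ∧ f (a * x) = b₂} =
      {x : L | (x ≠ 0 ∧ f x = b₁) ∧ b₂ = μ * b₁} := by
    grind
  rw [Ntt, fiber]
  split_ifs with hb <;> simp [hb]

section Homogeneous

variable {K L : Type*} [Field K] [Field L] [Algebra K L] {q n d : ℕ} {f : L → K}

theorem IsDHomogeneous.bijective_units_pow [Finite K] (hd : IsDHomogeneous q d f)
    (hK : Nat.card K = q) : Function.Bijective fun c : Kˣ ↦ c ^ d :=
  (powCoprime (by rw [Nat.card_units, hK]; exact hd.1.symm)).bijective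

theorem IsDiffBalanced.isBalanced [Finite K] (hf : IsDiffBalanced q n f)
    (hd : IsDHomogeneous q d f) (hK : Nat.card K = q) (hq : 2 < q) : IsBalanced q n f := by
  have : Nontrivial Kˣ := by
    rw [← Finite.one_lt_card_iff_nontrivial, Nat.card_units]
    omega
  obtain ⟨c, hc⟩ := exists_ne (1 : Kˣ)
  have hcd : (c : K) ^ d ≠ 1 := fun h ↦
    hc <| (hd.bijective_units_pow hK).injective <| Units.ext (by simpa using h)
  have hdiff := hf (algebraMap K L c) (by simp) (by simpa using hc)
  refine (hdiff.congr fun x hx ↦ ?_).of_const_mul (sub_ne_zero.mpr hcd)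
  rw [hd.2 c c.ne_zero x hx, sub_one_mul]

theorem IsDiffBalanced.isBalanced_sub_const_mul [Finite K] (hf : IsDiffBalanced q n f)
    (hd : IsDHomogeneous q d f) (hK : Nat.card K = q) (hbal : IsBalanced q n f) {a : L}
    (ha : a ≠ 0) (haK : ∀ c : K, algebraMap K L c ≠ a) (s : K) :
    IsBalanced q n fun x ↦ f (a * x) - s * f x := by
  obtain rfl | hs := eq_or_ne s 0
  · simpa only [zero_mul, sub_zero] using hbal.comp_mul_left ha
  obtain ⟨c, hc : c ^ d = Units.mk0 s hs⟩ := (hd.bijective_units_pow hK).surjective _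
  have hcd : (c : K) ^ d = s := by simpa using congrArg Units.val hc
  have hcL : algebraMap K L c ≠ 0 := by simp
  have hac : a / algebraMap K L c ≠ 1 := fun h ↦ haK c ((div_eq_one_iff_eq hcL).mp h).symm
  refine ((hf _ (div_ne_zero ha hcL) hac).comp_mul_left hcL).congr fun x hx ↦ ?_
  rw [← mul_assoc, div_mul_cancel₀ a hcL, hd.2 c c.ne_zero x hx, hcd]

theorem stmt_4_general [Finite K] [Finite L] (hn : 2 ≤ n) (hq : 2 < q) (hK : Nat.card K = q)
    (hL : Nat.card L = q ^ n) (hf : IsDiffBalanced q n f) (hd : IsDHomogeneous q d f) :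
    IsTwoTupleBalanced q n f := by
  classical
  have hbal : IsBalanced q n f := hf.isBalanced hd hK hq
  refine ⟨fun a ha haK ↦ ?_, fun c hc ↦ ⟨c ^ d, hd.2 c hc, ?_⟩⟩
  · have pairs (b₁ b₂ : K) :
        Ntt f a b₁ b₂ + (if b₁ = 0 ∧ b₂ = 0 then 1 else 0) = q ^ (n - 2) :=
      hbal.natCard_fiber_pair_add_ite (hf.isBalanced_sub_const_mul hd hK hbal ha haK) hK hL hn b₁ b₂
    exact ⟨Nat.eq_sub_of_add_eq (by simpa using pairs 0 0),
      fun b₁ b₂ hb ↦ by simpa [hb] using pairs b₁ b₂⟩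
  · have scalar := Ntt_eq_ite (hd.2 c hc)
    exact ⟨by simpa [scalar] using hbal.1, fun b hb ↦ by simpa [scalar] using hbal.2 b hb,
      fun b₁ b₂ hb ↦ by rw [scalar, if_neg hb]⟩

end Homogeneous

/-- If a difference balanced function `f : L∖{0} → K` is `d`-homogeneous,
then `f` is two-tuple balanced. -/
theorem stmt_4 {K L : Type*} [Field K] [Field L] [Algebra K L] [Fintype K] [Fintype L]
    (p m n q : ℕ) (hp : p.Prime) (hodd : Odd p) (hm : 1 ≤ m) (hn : 2 ≤ n)
    (hq : q = p ^ m) (hK : Fintype.card K = q) (hL : Fintype.card L = q ^ n)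
    (f : L → K) (hf : IsDiffBalanced q n f)
    (d : ℕ) (hd : IsDHomogeneous q d f) :
    IsTwoTupleBalanced q n f :=
  have two_lt_p : 2 < p := hp.two_le.lt_of_ne fun h ↦ absurd (h ▸ hodd) (by decide)
  stmt_4_general hn (hq ▸ two_lt_p.trans_le (Nat.le_self_pow (by omega) p))
    (by simpa using hK) (by simpa using hL) hf hd
end

section
/- Let p be an odd prime, q = p^m, and n ≥ 2. If f : L∖{0} → K is surjective onto K and two-tuple balanced, then f is d-homogeneous: there exists an integer d with gcd(d, q−1) = 1 such that f(cx) = c^d f(x) for all x ∈ L∖{0} and all c ∈ K∖{0}. -/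
/-!
On the punctured space `L ∖ {0}`, the group `Kˣ` acts freely, and `f` transforms under it through a
character `χ : Kˣ → Kˣ`. The kernel of `χ` acts freely on every level set of `f`, so its order
divides the size `q ^ (n - 1)` of the level set at `1`. It also divides `|Kˣ| = q - 1`, hence `χ` is
injective. As `Kˣ` is cyclic, `χ` is a power map, and injectivity makes the exponent coprime to
`q - 1`.
-/

section GroupAction

variable {G X : Type*} [Group G] [MulAction G X]

theorem exists_monoidHom_units_forall_map_smul_eq {M₀ : Type*} [GroupWithZero M₀] {f : X → M₀}
    (hf : ∀ g : G, ∃ μ : M₀, ∀ x, f (g • x) = μ * f x) {x₀ : X} (hx₀ : f x₀ ≠ 0) :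
    ∃ χ : G →* M₀ˣ, ∀ g x, f (g • x) = χ g • f x := by
  choose μ hμ using hf
  let μHom : G →* M₀ :=
    { toFun := μ
      map_one' := mul_right_cancel₀ hx₀ <| by rw [← hμ, one_smul, one_mul]
      map_mul' := fun g h => mul_right_cancel₀ hx₀ <| by rw [← hμ, mul_smul, hμ, hμ, mul_assoc] }
  exact ⟨μHom.toHomUnits, hμ⟩

variable (G X) in
theorem card_dvd_card_of_isCancelSMul [IsCancelSMul G X] : Nat.card G ∣ Nat.card X := by
  rw [Nat.card_congr (MulAction.selfEquivOrbitsQuotientProd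
    (IsCancelSMul.stabilizer_eq_bot (G := G) (α := X))), Nat.card_prod]
  exact dvd_mul_left _ _

theorem card_ker_dvd_card_fiber [IsCancelSMul G X] {H Y : Type*} [Monoid H] [MulAction H Y]
    {χ : G →* H} {f : X → Y} (hf : ∀ g x, f (g • x) = χ g • f x) (y : Y) :
    Nat.card χ.ker ∣ Nat.card (f ⁻¹' {y}) :=
  let fiber : SubMulAction χ.ker X :=
    { carrier := f ⁻¹' {y}
      smul_mem' := fun g x hx => by
        rw [Set.mem_preimage, Subgroup.smul_def, hf, g.2, one_smul]
        exact hx }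
  card_dvd_card_of_isCancelSMul χ.ker fiber

theorem injective_of_coprime_card_fiber [IsCancelSMul G X] {H Y : Type*} [Monoid H] [MulAction H Y]
    {χ : G →* H} {f : X → Y} (hf : ∀ g x, f (g • x) = χ g • f x) {y : Y}
    (hy : (Nat.card (f ⁻¹' {y})).Coprime (Nat.card G)) : Function.Injective χ := by
  have hker : Nat.card χ.ker = 1 :=
    Nat.eq_one_of_dvd_coprimes hy (card_ker_dvd_card_fiber hf y) χ.ker.card_subgroup_dvd_card
  exact χ.ker_eq_bot_iff.1 (Subgroup.card_eq_one.1 hker)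

end GroupAction

theorem exists_coprime_card_forall_eq_pow_of_injective {G : Type*} [Group G] [Finite G] [IsCyclic G]
    {χ : G →* G} (hχ : Function.Injective χ) :
    ∃ d : ℕ, d.Coprime (Nat.card G) ∧ ∀ g, χ g = g ^ d := by
  obtain ⟨g, hg⟩ := IsCyclic.exists_generator (α := G)
  have hpowers (h : G) : ∃ k : ℕ, g ^ k = h := mem_powers_iff_mem_zpowers.2 (hg h)
  obtain ⟨d, hd⟩ := hpowers (χ g)
  have hpow (h : G) : χ h = h ^ d := by
    obtain ⟨k, rfl⟩ := hpowers h
    rw [map_pow, ← hd, pow_right_comm]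
  have hmem : g ∈ Subgroup.zpowers (g ^ d) := by
    obtain ⟨h, hh⟩ := Finite.surjective_of_injective hχ g
    obtain ⟨k, rfl⟩ := hpowers h
    exact Subgroup.mem_zpowers_iff.2 ⟨k, by rw [zpow_natCast, hd, ← map_pow, hh]⟩
  rw [← orderOf_eq_card_of_forall_mem_zpowers hg]
  exact ⟨d, mem_zpowers_pow_iff.1 hmem, hpow⟩

theorem isCancelSMul_units (R A : Type*) [CommSemiring R] [Semiring A] [Algebra R A]
    [FaithfulSMul R A] : IsCancelSMul Rˣ Aˣ where
  left_cancel' a _ _ h := MulAction.injective a h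
  right_cancel' a b x h := by
    have hval : algebraMap R A a * x = algebraMap R A b * x := by
      simpa [Units.smul_def, Algebra.smul_def] using congrArg Units.val h
    exact Units.ext <| FaithfulSMul.algebraMap_injective R A <| x.isUnit.mul_right_cancel hval

theorem card_fiber_comp_units_val {M₀ Y : Type*} [GroupWithZero M₀] (f : M₀ → Y) (y : Y) :
    Nat.card ((f ∘ (Units.val : M₀ˣ → M₀)) ⁻¹' {y}) = Nat.card {x : M₀ | x ≠ 0 ∧ f x = y} := by
  rw [← Nat.card_preimage_of_injective (s := {x : M₀ | x ≠ 0 ∧ f x = y}) Units.val_injective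
    fun x hx => ⟨Units.mk0 x hx.1, rfl⟩]
  congr! 2
  ext x
  simp

theorem IsTwoTupleBalanced.card_levelSet {K L : Type*} [Field K] [Field L] [Algebra K L] {q n : ℕ}
    {f : L → K} (hf : IsTwoTupleBalanced q n f) {b : K} (hb : b ≠ 0) :
    Nat.card {x : L | x ≠ 0 ∧ f x = b} = q ^ (n - 1) := by
  obtain ⟨μ, hμ, -, hcard, -⟩ := hf.2 1 one_ne_zero
  rw [← hcard b hb, Ntt]
  congr! 4 with x
  exact ⟨fun ⟨hx, hfx⟩ => ⟨hx, hfx, hfx ▸ hμ x hx⟩, fun ⟨hx, hfx, _⟩ => ⟨hx, hfx⟩⟩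

theorem IsTwoTupleBalanced.coprime_card_levelSet {K L : Type*} [Field K] [Field L] [Algebra K L]
    {q n : ℕ} {f : L → K} (hf : IsTwoTupleBalanced q n f) (hq : 1 ≤ q) {b : K} (hb : b ≠ 0) :
    (Nat.card {x : L | x ≠ 0 ∧ f x = b}).Coprime (q - 1) := by
  rw [hf.card_levelSet hb]
  exact ((Nat.coprime_self_sub_right hq).2 (Nat.coprime_one_right q)).pow_left _

theorem stmt_5_general {K L : Type*} [Field K] [Finite K] [Field L] [Algebra K L] {q : ℕ}
    (hq : Nat.card K = q) {f : L → K}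
    (hf : ∀ c : K, c ≠ 0 → ∃ μ : K, ∀ x : L, x ≠ 0 → f (algebraMap K L c * x) = μ * f x)
    {x₀ : L} (hx₀ : x₀ ≠ 0) (hfx₀ : f x₀ ≠ 0)
    (hcop : (Nat.card {x : L | x ≠ 0 ∧ f x = f x₀}).Coprime (q - 1)) :
    ∃ d : ℕ, IsDHomogeneous q d f := by
  let fU : Lˣ → K := f ∘ Units.val
  have hval (c : Kˣ) (x : Lˣ) : ((c • x : Lˣ) : L) = algebraMap K L c * x := Algebra.smul_def _ _
  have hcard : Nat.card Kˣ = q - 1 := by rw [Nat.card_units, hq]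
  have hfU (c : Kˣ) : ∃ μ : K, ∀ x, fU (c • x) = μ * fU x :=
    (hf c c.ne_zero).imp fun μ hμ x => (congrArg f (hval c x)).trans (hμ x x.ne_zero)
  obtain ⟨χ, hχ⟩ := exists_monoidHom_units_forall_map_smul_eq hfU (x₀ := Units.mk0 x₀ hx₀) hfx₀
  have hinj : Function.Injective χ := by
    have := isCancelSMul_units K L
    refine injective_of_coprime_card_fiber hχ (y := f x₀) ?_
    rwa [card_fiber_comp_units_val, hcard]
  obtain ⟨d, hd, hpow⟩ := exists_coprime_card_forall_eq_pow_of_injective hinj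
  refine ⟨d, hcard ▸ hd, fun c hc x hx => ?_⟩
  simpa [fU, hval, hpow, Units.smul_def] using hχ (Units.mk0 c hc) (Units.mk0 x hx)

/-- If `f : L∖{0} → K` is surjective onto `K` and two-tuple balanced, then `f` is
`d`-homogeneous for some `d` with `gcd(d, q−1) = 1`. -/
theorem stmt_5 {K L : Type*} [Field K] [Field L] [Algebra K L] [Fintype K] [Fintype L]
    (p m n q : ℕ) (hp : p.Prime) (hodd : Odd p) (hm : 1 ≤ m) (hn : 2 ≤ n)
    (hq : q = p ^ m) (hK : Fintype.card K = q) (hL : Fintype.card L = q ^ n)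
    (f : L → K) (hsurj : ∀ b : K, ∃ x : L, x ≠ 0 ∧ f x = b)
    (hf : IsTwoTupleBalanced q n f) :
    ∃ d : ℕ, IsDHomogeneous q d f := by
  obtain ⟨x₀, hx₀, hfx₀⟩ := hsurj 1
  have hfx₀_ne : f x₀ ≠ 0 := hfx₀ ▸ one_ne_zero
  exact stmt_5_general (Nat.card_eq_fintype_card.trans hK)
    (fun c hc => (hf.2 c hc).imp fun _ h => h.1) hx₀ hfx₀_ne
    (hf.coprime_card_levelSet (hK ▸ Fintype.card_pos) hfx₀_ne)
end

section
/- Let p be an odd prime, q = p^m, and n ≥ 1. If f : L∖{0} → K is surjective onto K, difference balanced, and d-homogeneous, then for every t ∈ K∖{0} there exists a ∈ L∖{0} such that {(x, t·f(x)) : x ∈ L∖{0}} = {(a·x, f(x)) : x ∈ L∖{0}} as subsets of L × K; that is, each pair (1, t) with t ∈ K∖{0} is a multiplier of the graph D = {(x, f(x)) : x ∈ L∖{0}} with D^{(1,t)} = (a,0)D. -/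
/-!
As `d` is prime to `q - 1`, the map `c ↦ c ^ d` permutes the nonzero elements of `K`, so `t = c ^ d`
for some `c ≠ 0`. Then `t * f x = f (c * x)`, and the substitution `y = c * x`, which permutes
`L∖{0}`, turns the point `(x, t * f x)` into `(c⁻¹ * y, f y)`.
-/

open scoped Pointwise

theorem exists_ne_zero_pow_eq_of_coprime {G₀ : Type*} [GroupWithZero G₀] [Fintype G₀] {d : ℕ}
    (hd : d.Coprime (Fintype.card G₀ - 1)) {t : G₀} (ht : t ≠ 0) : ∃ c : G₀, c ≠ 0 ∧ c ^ d = t := by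
  have hcard : (Nat.card G₀ˣ).Coprime d := by
    rwa [Nat.card_units, Nat.card_eq_fintype_card, Nat.coprime_comm]
  obtain ⟨c, hc⟩ := (powCoprime hcard).surjective (Units.mk0 t ht)
  exact ⟨c, c.ne_zero, congrArg Units.val hc⟩

theorem image_prodMap_graphOn_comp {α β γ : Type*} (e : α → β) (f : β → γ) (s : Set α) :
    Prod.map e id '' s.graphOn (f ∘ e) = (e '' s).graphOn f := by
  simp only [Set.graphOn, Set.image_image, Prod.map_apply, Function.comp_apply, id_eq]

theorem smul_set_compl_zero₀ {G₀ V : Type*} [GroupWithZero G₀] [Zero V] [MulActionWithZero G₀ V]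
    {c : G₀} (hc : c ≠ 0) : c • ({0}ᶜ : Set V) = {0}ᶜ := by
  rw [← Set.image_smul, Set.image_compl_eq (MulAction.bijective₀ hc), Set.image_singleton,
    smul_zero]

theorem graphOn_eq_image_smul_of_eqOn {G₀ V W : Type*} [GroupWithZero G₀] [MulAction G₀ V]
    {f g : V → W} {s : Set V} {c : G₀} (hc : c ≠ 0) (hfg : s.EqOn g (f ∘ (c • ·))) :
    s.graphOn g = Prod.map (c⁻¹ • ·) id '' (c • s).graphOn f := by
  have hinv : Prod.map (c⁻¹ • ·) id ∘ Prod.map (c • ·) id = (id : V × W → V × W) := by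
    ext x <;> simp [inv_smul_smul₀ hc]
  calc s.graphOn g
      = s.graphOn (f ∘ (c • ·)) := Set.graphOn_inj.2 hfg
    _ = Prod.map (c⁻¹ • ·) id '' (Prod.map (c • ·) id '' s.graphOn (f ∘ (c • ·))) := by
      rw [← Set.image_comp, hinv, Set.image_id]
    _ = Prod.map (c⁻¹ • ·) id '' (c • s).graphOn f := by
      rw [image_prodMap_graphOn_comp, Set.image_smul]

theorem IsDHomogeneous.map_smul {K L : Type*} [Field K] [Field L] [Algebra K L] {q d : ℕ}
    {f : L → K} (hf : IsDHomogeneous q d f) (c : K) (hc : c ≠ 0) (x : L) (hx : x ≠ 0) :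
    f (c • x) = c ^ d • f x := by
  rw [Algebra.smul_def, hf.2 c hc x hx, smul_eq_mul]

theorem stmt_6_general {K V W : Type*} [GroupWithZero K] [Fintype K] [Zero V]
    [MulActionWithZero K V] [SMul K W] {d : ℕ} (hd : d.Coprime (Fintype.card K - 1))
    {f : V → W} (hf : ∀ c : K, c ≠ 0 → ∀ x, x ≠ 0 → f (c • x) = c ^ d • f x)
    {t : K} (ht : t ≠ 0) :
    ∃ a : K, a ≠ 0 ∧
      ({0}ᶜ : Set V).graphOn (t • f) = Prod.map (a • ·) id '' ({0}ᶜ : Set V).graphOn f := by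
  obtain ⟨c, hc, rfl⟩ := exists_ne_zero_pow_eq_of_coprime hd ht
  have hfc : ({0}ᶜ : Set V).EqOn (c ^ d • f) (f ∘ (c • ·)) := fun x hx ↦ (hf c hc x hx).symm
  refine ⟨c⁻¹, inv_ne_zero hc, ?_⟩
  rw [graphOn_eq_image_smul_of_eqOn hc hfc, smul_set_compl_zero₀ hc]

/-- If `f : L∖{0} → K` is surjective onto `K`, difference balanced and `d`-homogeneous,
then for every `t ∈ K∖{0}` there is `a ∈ L∖{0}` with
`{(x, t·f(x))} = {(a·x, f(x))}`, i.e. `(1,t)` is a multiplier of the graph of `f`. -/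
theorem stmt_6 {K L : Type*} [Field K] [Field L] [Algebra K L] [Fintype K] [Fintype L]
    (p m n q : ℕ) (hp : p.Prime) (hodd : Odd p) (hm : 1 ≤ m) (hn : 1 ≤ n)
    (hq : q = p ^ m) (hK : Fintype.card K = q) (hL : Fintype.card L = q ^ n)
    (f : L → K) (hsurj : ∀ b : K, ∃ x : L, x ≠ 0 ∧ f x = b)
    (hf : IsDiffBalanced q n f) (d : ℕ) (hd : IsDHomogeneous q d f) :
    ∀ t : K, t ≠ 0 → ∃ a : L, a ≠ 0 ∧
      {pr : L × K | ∃ x : L, x ≠ 0 ∧ pr = (x, t * f x)} =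
        {pr : L × K | ∃ x : L, x ≠ 0 ∧ pr = (a * x, f x)} := by
  intro t ht
  obtain ⟨a, ha, h⟩ := stmt_6_general (hK ▸ hd.1) hd.map_smul ht
  exact ⟨algebraMap K L a, by simpa using ha,
    by simpa [Set.graphOn, Set.image, eq_comm, Algebra.smul_def] using h⟩
end

section
/- Let p be an odd prime, q = p^m, and n ≥ 1. Suppose f : L∖{0} → K is surjective onto K and difference balanced, and suppose that for every t ∈ K∖{0} there exists a ∈ L∖{0} such that {(x, t·f(x)) : x ∈ L∖{0}} = {(a·x, f(x)) : x ∈ L∖{0}} as subsets of L × K. Then f is d-homogeneous: there exists an integer d with gcd(d, q−1) = 1 such that f(cx) = c^d f(x) for all x ∈ L∖{0} and all c ∈ K∖{0}. -/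
/-!
For `a ≠ 1` the difference `f (a * x) - f x` takes the value `1`, so no nontrivial dilation fixes
`f`. Hence the dilation `σ t` that scales `f` by `t ∈ Kˣ` is unique, and `σ : Kˣ → Lˣ` is a
homomorphism, injective because `f` is not identically zero on `Lˣ`. Its image has `|K| - 1`
elements, as does the image of the inclusion of `Kˣ`, and `Lˣ` contains at most one subgroup of any
given finite order. As `Kˣ` is cyclic, the two embeddings differ by a power map `t ↦ t ^ d`, with
`d` prime to `|K| - 1`.
-/

lemma exists_monoidHom_apply_smul_eq {T G X Y : Type*} [Group T] [Group G] [MulAction T Y]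
    [MulAction G X] {f : X → Y} (hfix : ∀ a : G, (∀ x, f (a • x) = f x) → a = 1)
    (hscale : ∀ t : T, ∃ a : G, ∀ x, f (a • x) = t • f x) :
    ∃ σ : T →* G, ∀ t x, f (σ t • x) = t • f x := by
  choose σ hσ using hscale
  have eq_of_apply_smul_eq {a b : G} (h : ∀ x, f (a • x) = f (b • x)) : a = b := by
    refine mul_inv_eq_one.1 (hfix _ fun x => ?_)
    rw [mul_smul, h, smul_inv_smul]
  refine ⟨MonoidHom.mk' σ fun t u => eq_of_apply_smul_eq fun x => ?_, hσ⟩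
  rw [hσ, mul_smul, mul_smul, hσ, hσ]

lemma range_eq_rootsOfUnity_of_injective {C R : Type*} [Group C] [Finite C] [CommRing R]
    [IsDomain R] {φ : C →* Rˣ} (hφ : Function.Injective φ) :
    φ.range = rootsOfUnity (Nat.card C) R := by
  have : NeZero (Nat.card C) := ⟨Nat.card_pos.ne'⟩
  refine Subgroup.eq_of_le_of_card_ge ?_ ?_
  · rintro _ ⟨c, rfl⟩
    rw [mem_rootsOfUnity, ← map_pow, pow_card_eq_one', map_one]
  · rw [Nat.card_congr (MonoidHom.ofInjective hφ).toEquiv.symm]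
    exact card_rootsOfUnity R (Nat.card C)

lemma exists_coprime_forall_eq_apply_pow {C R : Type*} [Group C] [Finite C] [CommRing R]
    [IsDomain R] {φ ψ : C →* Rˣ} (hφ : Function.Injective φ) (hψ : Function.Injective ψ) :
    ∃ d : ℕ, d.Coprime (Nat.card C) ∧ ∀ c, φ c = ψ (c ^ d) := by
  have : IsCyclic C :=
    isCyclic_of_injective_ringHom ((Units.coeHom R).comp φ) (Units.val_injective.comp hφ)
  obtain ⟨g, hg⟩ := IsCyclic.exists_generator (α := C)
  obtain ⟨h, hh⟩ : φ g ∈ ψ.range := by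
    rw [range_eq_rootsOfUnity_of_injective hψ, ← range_eq_rootsOfUnity_of_injective hφ]
    exact ⟨g, rfl⟩
  obtain ⟨d, rfl⟩ := mem_powers_iff_mem_zpowers.2 (hg h)
  refine ⟨d, ?_, fun c => ?_⟩
  · have horder : orderOf (g ^ d) = orderOf g := by
      rw [← orderOf_injective ψ hψ, hh, orderOf_injective φ hφ]
    rw [orderOf_pow, Nat.div_eq_self, orderOf_eq_card_of_forall_mem_zpowers hg] at horder
    exact Nat.coprime_comm.1 (horder.resolve_left Nat.card_pos.ne')
  · obtain ⟨k, rfl⟩ := hg c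
    rw [map_zpow, ← hh, ← map_zpow]
    congr 1
    group

lemma IsDiffBalanced.eq_one_of_forall_apply_mul_eq {K L : Type*} [Field K] [Field L] {q n : ℕ}
    {f : L → K} (hf : IsDiffBalanced q n f) (hq : q ≠ 0) (a : Lˣ)
    (hfix : ∀ x : Lˣ, f (a * x) = f x) : a = 1 := by
  by_contra ha
  have hcard : Nat.card {x : L | x ≠ 0 ∧ f (a * x) - f x = 1} = q ^ (n - 1) :=
    (hf a a.ne_zero (by simpa using ha)).2 1 one_ne_zero
  have hempty : {x : L | x ≠ 0 ∧ f (a * x) - f x = 1} = ∅ := by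
    refine Set.eq_empty_of_forall_notMem fun x ⟨hx, hdiff⟩ => ?_
    simp [show f (a * x) = f x from hfix (Units.mk0 x hx)] at hdiff
  rw [hempty, Nat.card_of_isEmpty] at hcard
  exact pow_ne_zero _ hq hcard.symm

lemma apply_eq_mul_of_graph_subset {K L : Type*} [Mul K] [Mul L] [Zero L] {f : L → K} {t : K}
    {a : L} (hgraph : {pr : L × K | ∃ x : L, x ≠ 0 ∧ pr = (a * x, f x)} ⊆
      {pr : L × K | ∃ x : L, x ≠ 0 ∧ pr = (x, t * f x)}) {x : L} (hx : x ≠ 0) :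
    f x = t * f (a * x) := by
  obtain ⟨_, -, hy⟩ := hgraph ⟨x, hx, rfl⟩
  obtain ⟨rfl, hfx⟩ := Prod.mk.inj hy
  exact hfx

lemma exists_unit_apply_mul_eq_of_graph_eq {K L : Type*} [MonoidWithZero K] [Nontrivial K]
    [GroupWithZero L] {f : L → K}
    (hmult : ∀ t : K, t ≠ 0 → ∃ a : L, a ≠ 0 ∧
      {pr : L × K | ∃ x : L, x ≠ 0 ∧ pr = (x, t * f x)} =
        {pr : L × K | ∃ x : L, x ≠ 0 ∧ pr = (a * x, f x)}) (t : Kˣ) :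
    ∃ a : Lˣ, ∀ x : Lˣ, f (a * x) = t * f x := by
  obtain ⟨a, ha, hgraph⟩ := hmult ↑t⁻¹ t⁻¹.ne_zero
  refine ⟨Units.mk0 a ha, fun x => ?_⟩
  rw [apply_eq_mul_of_graph_subset hgraph.ge x.ne_zero, Units.mul_inv_cancel_left, Units.val_mk0]

theorem stmt_7_general {K L : Type*} [Field K] [Field L] [Algebra K L] [Finite K] {f : L → K}
    (hne : ∃ x : Lˣ, f x ≠ 0) (hfix : ∀ a : Lˣ, (∀ x : Lˣ, f (a * x) = f x) → a = 1)
    (hscale : ∀ t : Kˣ, ∃ a : Lˣ, ∀ x : Lˣ, f (a * x) = t * f x) :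
    ∃ d : ℕ, IsDHomogeneous (Nat.card K) d f := by
  obtain ⟨σ, hσ⟩ : ∃ σ : Kˣ →* Lˣ, ∀ (t : Kˣ) (x : Lˣ), f (σ t * x) = t * f x :=
    exists_monoidHom_apply_smul_eq (f := fun x : Lˣ => f x) hfix hscale
  have hσ_inj : Function.Injective σ := by
    obtain ⟨x, hfx⟩ := hne
    intro t u htu
    exact Units.ext (mul_right_cancel₀ hfx (by rw [← hσ, htu, hσ]))
  obtain ⟨d, hcop, hd⟩ := exists_coprime_forall_eq_apply_pow
    (Units.map_injective (f := (algebraMap K L : K →* L)) (algebraMap K L).injective) hσ_inj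
  refine ⟨d, Nat.card_units K ▸ hcop, fun c hc x hx => ?_⟩
  calc f (algebraMap K L c * x) = f (σ (Units.mk0 c hc ^ d) * x) := by
        rw [← hd, Units.coe_map, Units.val_mk0, MonoidHom.coe_coe]
    _ = c ^ d * f x := by simpa using hσ (Units.mk0 c hc ^ d) (Units.mk0 x hx)

/-- If `f : L∖{0} → K` is surjective onto `K`, difference balanced, and every `(1,t)`
with `t ∈ K∖{0}` is a multiplier of the graph of `f` (via a translate `(a,0)`),
then `f` is `d`-homogeneous for some `d` with `gcd(d, q−1) = 1`. -/
theorem stmt_7 {K L : Type*} [Field K] [Field L] [Algebra K L] [Fintype K] [Fintype L]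
    (p m n q : ℕ) (hp : p.Prime) (hodd : Odd p) (hm : 1 ≤ m) (hn : 1 ≤ n)
    (hq : q = p ^ m) (hK : Fintype.card K = q) (hL : Fintype.card L = q ^ n)
    (f : L → K) (hsurj : ∀ b : K, ∃ x : L, x ≠ 0 ∧ f x = b)
    (hf : IsDiffBalanced q n f)
    (hmult : ∀ t : K, t ≠ 0 → ∃ a : L, a ≠ 0 ∧
      {pr : L × K | ∃ x : L, x ≠ 0 ∧ pr = (x, t * f x)} =
        {pr : L × K | ∃ x : L, x ≠ 0 ∧ pr = (a * x, f x)}) :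
    ∃ d : ℕ, IsDHomogeneous q d f := by
  obtain ⟨x, hx, hfx⟩ := hsurj 1
  exact hK ▸ Nat.card_eq_fintype_card (α := K) ▸ stmt_7_general
    ⟨Units.mk0 x hx, by simp [hfx]⟩
    (hf.eq_one_of_forall_apply_mul_eq (hK ▸ Fintype.card_ne_zero))
    (exists_unit_apply_mul_eq_of_graph_eq hmult)
end

section
/- Let p be an odd prime, q = p^m, and n ≥ 2. If f : L∖{0} → K is surjective onto K and two-tuple balanced, then for every b ∈ K∖{0} the preimage D_b := {x ∈ L∖{0} : f(x) = b}, viewed as a subset of the multiplicative group L^×, is a ((q^n−1)/(q−1), q−1, q^{n−1}, q^{n−2}) relative difference set relative to the subgroup K^× (the image of K∖{0} in L^×). -/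
/-- `D ⊆ G` is an `(m, n, k, λ)` relative difference set relative to the subgroup `N`:
`|G| = mn`, `|N| = n`, `|D| = k`, every `g ∉ N` has exactly `λ` representations
`g = d₁d₂⁻¹` with `d₁, d₂ ∈ D`, and every `g ∈ N`, `g ≠ 1`, has none. -/
def IsRelDiffSet {G : Type*} [Group G] (D : Set G) (N : Subgroup G)
    (m n k lam : ℕ) : Prop :=
  Nat.card G = m * n ∧ Nat.card N = n ∧ Nat.card D = k ∧
    (∀ g : G, g ∉ N →
      Nat.card {pq : G × G // pq.1 ∈ D ∧ pq.2 ∈ D ∧ pq.1 * pq.2⁻¹ = g} = lam) ∧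
    (∀ g : G, g ∈ N → g ≠ 1 →
      Nat.card {pq : G × G // pq.1 ∈ D ∧ pq.2 ∈ D ∧ pq.1 * pq.2⁻¹ = g} = 0)

/-! Counting shows that `|D_b| = N_{b,b}(1) = q^(n-1)`, and that an element `g` of `L^×` has
`N_{b,b}(g)` representations as a quotient of elements of `D_b`, so two-tuple balancedness settles
every `g ∉ K^×`. If some `c ∈ K^×` has a representation, then `f(cx) = μ f(x)` with `μ b = b`, so
`μ = 1` and `c` stabilizes `D_b`. The stabilizer of `D_b` acts freely on it, so its order divides
`q^(n-1)` and is coprime to `|K^×| = q - 1`; hence `c = 1`. -/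

section Group

variable {G : Type*} [Group G]

theorem card_quotient_representations (D : Set G) (g : G) :
    Nat.card {pq : G × G // pq.1 ∈ D ∧ pq.2 ∈ D ∧ pq.1 * pq.2⁻¹ = g} =
      Nat.card {x : G | x ∈ D ∧ g * x ∈ D} :=
  Nat.card_congr
    { toFun := fun ⟨pq, hp, hq, hg⟩ => ⟨pq.2, hq, by simpa [← hg] using hp⟩
      invFun := fun ⟨x, hx, hgx⟩ => ⟨(g * x, x), hgx, hx, mul_inv_cancel_right g x⟩
      left_inv := by
        rintro ⟨⟨u, v⟩, hu, hv, rfl⟩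
        simp
      right_inv := fun ⟨_, _, _⟩ => rfl }

open scoped Pointwise

variable {α : Type*} [MulAction G α] [IsCancelSMul G α]

theorem card_stabilizer_dvd_card (s : Set α) :
    Nat.card (MulAction.stabilizer G s) ∣ Nat.card s := by
  have free (x : s) : MulAction.stabilizer (MulAction.stabilizer G s) x = ⊥ := by
    refine (Subgroup.eq_bot_iff_forall _).mpr fun g hg => Subtype.ext ?_
    have hfix : (g : G) • (x : α) = x := congrArg Subtype.val hg
    have hmem : (g : G) ∈ MulAction.stabilizer G (x : α) := hfix
    rwa [IsCancelSMul.stabilizer_eq_bot, Subgroup.mem_bot] at hmem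
  rw [Nat.card_congr (MulAction.selfEquivOrbitsQuotientProd free), Nat.card_prod]
  exact dvd_mul_left _ _

theorem disjoint_stabilizer_of_coprime_card {N : Subgroup G} {s : Set α}
    (h : (Nat.card N).Coprime (Nat.card s)) : Disjoint N (MulAction.stabilizer G s) :=
  Subgroup.disjoint_of_coprime_natCard (h.coprime_dvd_right (card_stabilizer_dvd_card s))

end Group

theorem card_setOf_units {G₀ : Type*} [GroupWithZero G₀] (P : G₀ → Prop) :
    Nat.card {u : G₀ˣ | P u} = Nat.card {x : G₀ | x ≠ 0 ∧ P x} :=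
  Nat.card_congr <| (unitsEquivNeZero.subtypeEquiv fun _ => Iff.rfl).trans
    (Equiv.subtypeSubtypeEquivSubtypeInter (· ≠ 0) P)

theorem coprime_sub_one_pow {q : ℕ} (hq : q ≠ 0) (k : ℕ) : (q - 1).Coprime (q ^ k) :=
  .pow_right k <| (Nat.coprime_self_sub_left (Nat.one_le_iff_ne_zero.mpr hq)).mpr
    (Nat.coprime_one_left q)

section Field

variable {K L : Type*} [Field K] [Field L]

/-- The fibre `D_b` of `f` over `b`, as a subset of the unit group `L^×`. -/
abbrev unitFiber (f : L → K) (b : K) : Set Lˣ := {u : Lˣ | f (u : L) = b}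

theorem card_unitFiber_eq_Ntt_one (f : L → K) (b : K) : Nat.card (unitFiber f b) = Ntt f 1 b b := by
  simp only [Ntt, one_mul, and_self, card_setOf_units (f · = b)]

theorem card_quotient_representations_unitFiber (f : L → K) (b : K) (g : Lˣ) :
    Nat.card {pq : Lˣ × Lˣ //
      pq.1 ∈ unitFiber f b ∧ pq.2 ∈ unitFiber f b ∧ pq.1 * pq.2⁻¹ = g} = Ntt f g b b :=
  (card_quotient_representations _ g).trans
    (card_setOf_units fun x => f x = b ∧ f (g * x) = b)

variable [Algebra K L]

variable (K L) in
/-- The subgroup `K^×` of `L^×`: the image of the unit group of `K` under the structure map. -/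
abbrev scalarUnits : Subgroup Lˣ := (Units.map (algebraMap K L).toMonoidHom).range

theorem mem_scalarUnits_iff {g : Lˣ} : g ∈ scalarUnits K L ↔ ∃ c : K, algebraMap K L c = g := by
  refine ⟨fun ⟨c, hc⟩ => ⟨c, congrArg Units.val hc⟩, fun ⟨c, hc⟩ => ?_⟩
  have hc0 : c ≠ 0 := fun h => g.ne_zero (by rw [← hc, h, map_zero])
  exact ⟨Units.mk0 c hc0, Units.ext hc⟩

variable (K L) in
theorem card_scalarUnits : Nat.card (scalarUnits K L) = Nat.card K - 1 :=
  (Nat.card_range_of_injective (Units.map_injective (algebraMap K L).injective)).trans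
    (Nat.card_units K)

namespace IsTwoTupleBalanced

variable {q n : ℕ} {f : L → K} {b : K} {g : Lˣ}

theorem card_unitFiber (hf : IsTwoTupleBalanced q n f) (hq : q ≠ 0) (hb : b ≠ 0) :
    Nat.card (unitFiber f b) = q ^ (n - 1) := by
  obtain ⟨μ, -, -, hcount, -⟩ := hf.2 1 one_ne_zero
  have hN : Ntt f 1 b (μ * b) = q ^ (n - 1) := by simpa only [map_one] using hcount b hb
  have hμb : μ * b = b := by
    obtain ⟨⟨x, -, hx, hμx⟩⟩ := (Nat.card_ne_zero.mp (hN ▸ pow_ne_zero _ hq)).1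
    rw [← hμx, one_mul, hx]
  rw [card_unitFiber_eq_Ntt_one, ← hN, hμb]

theorem Ntt_eq_pow_of_notMem_scalarUnits (hf : IsTwoTupleBalanced q n f) (hb : b ≠ 0)
    (hg : g ∉ scalarUnits K L) : Ntt f g b b = q ^ (n - 2) :=
  (hf.1 g g.ne_zero fun c hc => hg (mem_scalarUnits_iff.mpr ⟨c, hc⟩)).2 b b fun h => hb h.1

open scoped Pointwise in
theorem mem_stabilizer_unitFiber_of_Ntt_ne_zero (hf : IsTwoTupleBalanced q n f) (hb : b ≠ 0)
    (hg : g ∈ scalarUnits K L) (hN : Ntt f g b b ≠ 0) :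
    g ∈ MulAction.stabilizer Lˣ (unitFiber f b) := by
  obtain ⟨c, rfl⟩ := hg
  obtain ⟨μ, hμ, -, -, hzero⟩ := hf.2 c c.ne_zero
  have hμb : b = μ * b := of_not_not fun h => hN (hzero b b h)
  have hinv (u : Lˣ) : f (algebraMap K L c * u) = f u := by
    rw [hμ u u.ne_zero, (mul_eq_right₀ hb).mp hμb.symm, one_mul]
  exact MulAction.mem_stabilizer_set.mpr fun u => Eq.congr_left (hinv u)

theorem Ntt_eq_zero_of_mem_scalarUnits [Finite K] (hf : IsTwoTupleBalanced q n f)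
    (hK : Nat.card K = q) (hb : b ≠ 0) (hg : g ∈ scalarUnits K L) (hg1 : g ≠ 1) :
    Ntt f g b b = 0 := by
  have hq : q ≠ 0 := hK ▸ Nat.card_pos.ne'
  have hcoprime : (Nat.card (scalarUnits K L)).Coprime (Nat.card (unitFiber f b)) := by
    rw [card_scalarUnits, hK, hf.card_unitFiber hq hb]
    exact coprime_sub_one_pow hq _
  by_contra hN
  exact hg1 <| Subgroup.disjoint_def.mp (disjoint_stabilizer_of_coprime_card hcoprime) hg
    (hf.mem_stabilizer_unitFiber_of_Ntt_ne_zero hb hg hN)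

end IsTwoTupleBalanced

theorem stmt_8_general [Finite K] {q n : ℕ} (hK : Nat.card K = q) (hL : Nat.card L = q ^ n)
    {f : L → K} (hf : IsTwoTupleBalanced q n f) {b : K} (hb : b ≠ 0) :
    IsRelDiffSet (unitFiber f b) (scalarUnits K L)
      ((q ^ n - 1) / (q - 1)) (q - 1) (q ^ (n - 1)) (q ^ (n - 2)) := by
  refine ⟨?_, hK ▸ card_scalarUnits K L, hf.card_unitFiber (hK ▸ Nat.card_pos.ne') hb,
    fun g hg => ?_, fun g hg hg1 => ?_⟩
  · have hdvd : q - 1 ∣ q ^ n - 1 := by simpa only [one_pow] using Nat.sub_dvd_pow_sub_pow q 1 n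
    rw [Nat.card_units, hL, Nat.div_mul_cancel hdvd]
  · rw [card_quotient_representations_unitFiber, hf.Ntt_eq_pow_of_notMem_scalarUnits hb hg]
  · rw [card_quotient_representations_unitFiber,
      hf.Ntt_eq_zero_of_mem_scalarUnits hK hb hg hg1]

end Field

/-- If `f : L∖{0} → K` is surjective onto `K` and two-tuple balanced, then for every
`b ∈ K∖{0}` the preimage `D_b = {x : f(x) = b}` is a
`((qⁿ−1)/(q−1), q−1, q^{n−1}, q^{n−2})` relative difference set in `L^×`
relative to `K^×`. -/
theorem stmt_8 {K L : Type*} [Field K] [Field L] [Algebra K L] [Fintype K] [Fintype L]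
    (p m n q : ℕ) (hp : p.Prime) (hodd : Odd p) (hm : 1 ≤ m) (hn : 2 ≤ n)
    (hq : q = p ^ m) (hK : Fintype.card K = q) (hL : Fintype.card L = q ^ n)
    (f : L → K) (hsurj : ∀ b : K, ∃ x : L, x ≠ 0 ∧ f x = b)
    (hf : IsTwoTupleBalanced q n f) :
    ∀ b : K, b ≠ 0 →
      IsRelDiffSet {u : Lˣ | f (u : L) = b}
        (Units.map (algebraMap K L).toMonoidHom).range
        ((q ^ n - 1) / (q - 1)) (q - 1) (q ^ (n - 1)) (q ^ (n - 2)) := fun b hb =>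
  stmt_8_general (by rwa [Nat.card_eq_fintype_card]) (by rwa [Nat.card_eq_fintype_card]) hf hb
end

section
/- Let p be an odd prime, q = p^m, and n ≥ 2. Let C ⊆ L^× be a ((q^n−1)/(q−1), q−1, q^{n−1}, q^{n−2}) relative difference set relative to K^×, let d be an integer with gcd(d, q−1) = 1, and let f : L∖{0} → K be a function satisfying: f(b·x) = b^d for every b ∈ K∖{0} and every x ∈ C, and f(x) = 0 for every x ∈ L∖{0} not lying in any coset b·C with b ∈ K∖{0} (such an f exists and is well defined since the cosets b·C, b ∈ K∖{0}, are pairwise disjoint). Then f is two-tuple balanced; in particular f is d-homogeneous and difference balanced. -/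
/-!
Only the values of `f` on `L ∖ {0}` matter, so let `f 0 = 0`. Balancedness then says that every
fiber of `f` has `q ^ (n - 1)` elements, and for `a ∉ K` the two-tuple condition says that every
fiber of `x ↦ (f x, f (a x))` has `q ^ (n - 2)` elements. As `b ↦ b ^ d` permutes `Kˣ`, the fiber of
`f` over `b ^ d` is the coset `b C`, and the joint fiber over `(b ^ d, c ^ d)` is `b C ∩ a⁻¹ c C`,
whose elements correspond to the representations of `c⁻¹ a b ∉ K` as a quotient of two elements
of `C`. The fibers involving a zero value are what remains in the row and column sums.

For `a ∉ K`, composing the pair with the subtraction map `K × K → K`, whose fibers all have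
`q` elements, shows that `f` is difference balanced at `a`; for `a ∈ K`, homogeneity gives
`f (a x) - f x = (a ^ d - 1) f x`, and `a ^ d ≠ 1` unless `a = 1`.
-/

section UniformFibers

variable {α β γ : Type*} {g : α → β} {h : α → γ} {s t : ℕ}

/-- Every value of `g` is taken exactly `s` times. For the function `f` of the theorem, extended by
`f 0 = 0`, this absorbs the corrections `- 1` at zero values in the definitions of balancedness. -/
def HasUniformFibers (g : α → β) (s : ℕ) : Prop :=
  ∀ b, (g ⁻¹' {b}).ncard = s

theorem hasUniformFibers_one_of_bijective (hg : g.Bijective) : HasUniformFibers g 1 := fun b => by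
  obtain ⟨a, rfl⟩ := hg.surjective b
  rw [← Set.image_singleton, hg.injective.preimage_image, Set.ncard_singleton]

theorem hasUniformFibers_snd_sub_fst (G : Type*) [AddGroup G] :
    HasUniformFibers (fun z : G × G => z.2 - z.1) (Nat.card G) := fun b => by
  have hfiber : (fun z : G × G => z.2 - z.1) ⁻¹' {b} = (fun x => (x, b + x)) '' Set.univ := by
    ext ⟨x, y⟩
    simp [sub_eq_iff_eq_add, @eq_comm _ _ y]
  rw [hfiber, Set.ncard_image_of_injective _ fun x y hxy => congrArg Prod.fst hxy, Set.ncard_univ]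

theorem HasUniformFibers.ncard_preimage [Finite α] (hg : HasUniformFibers g s) {T : Set β}
    (hT : T.Finite) : (g ⁻¹' T).ncard = T.ncard * s := by
  have hdisj : T.PairwiseDisjoint fun b => g ⁻¹' {b} := fun b _ c _ hbc =>
    Disjoint.preimage g (Set.disjoint_singleton.2 hbc)
  rw [← Set.biUnion_preimage_singleton, hT.ncard_biUnion (fun _ _ => Set.toFinite _) hdisj,
    finsum_mem_congr rfl fun b _ => hg b, finsum_mem_eq_finite_toFinset_sum _ hT, Finset.sum_const,
    smul_eq_mul, Set.ncard_eq_toFinset_card T hT]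

theorem HasUniformFibers.comp [Finite α] [Finite β] {h : β → γ} (hh : HasUniformFibers h t)
    (hg : HasUniformFibers g s) : HasUniformFibers (h ∘ g) (t * s) := fun c => by
  rw [Set.preimage_comp, hg.ncard_preimage (Set.toFinite _), hh c]

theorem HasUniformFibers.ncard_ne_and_eq (hg : HasUniformFibers g s) (a : α) :
    {x | x ≠ a ∧ g x = g a}.ncard = s - 1 := by
  have hset : {x | x ≠ a ∧ g x = g a} = g ⁻¹' {g a} \ {a} := Set.ext fun x => and_comm
  rw [hset, Set.ncard_sdiff_singleton_of_mem (show a ∈ g ⁻¹' {g a} from rfl), hg]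

theorem HasUniformFibers.ncard_ne_and_eq_of_ne (hg : HasUniformFibers g s) {a : α} {b : β}
    (hb : b ≠ g a) : {x | x ≠ a ∧ g x = b}.ncard = s := by
  rw [← hg b]
  congr 1
  ext x
  exact and_iff_right_of_imp fun hx hxa => hb (hx.symm.trans (congrArg g hxa))

theorem ncard_eq_sum_ncard_inter_preimage [Finite α] [Fintype β] (S : Set α) (g : α → β) :
    S.ncard = ∑ b, (S ∩ g ⁻¹' {b}).ncard := by
  classical
  have := Fintype.ofFinite α
  rw [Set.ncard_eq_toFinset_card',
    Finset.card_eq_sum_card_fiberwise (f := g) (t := .univ) (by simp)]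
  refine Finset.sum_congr rfl fun b _ => ?_
  rw [Set.ncard_eq_toFinset_card']
  congr 1
  ext x
  simp

theorem ncard_inter_preimage_eq_of_forall_ne [Finite α] [Fintype β] {S : Set α} {b₀ : β}
    (hS : S.ncard = Fintype.card β * s) (hne : ∀ b ≠ b₀, (S ∩ g ⁻¹' {b}).ncard = s) (b : β) :
    (S ∩ g ⁻¹' {b}).ncard = s := by
  classical
  by_cases hb : b = b₀
  · refine Nat.add_right_cancel (m := ∑ _ ∈ Finset.univ.erase b, s) ?_
    calc (S ∩ g ⁻¹' {b}).ncard + ∑ _ ∈ Finset.univ.erase b, s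
        = ∑ c, (S ∩ g ⁻¹' {c}).ncard := by
          rw [← Finset.add_sum_erase _ _ (Finset.mem_univ b),
            Finset.sum_congr rfl fun c hc => hne c (hb ▸ Finset.ne_of_mem_erase hc)]
      _ = ∑ _ : β, s := by rw [← ncard_eq_sum_ncard_inter_preimage, hS]; simp
      _ = s + ∑ _ ∈ Finset.univ.erase b, s := (Finset.add_sum_erase _ _ (Finset.mem_univ b)).symm
  · exact hne b hb

theorem HasUniformFibers.prodMk_of_forall_ne [Finite α] [Fintype β] [Fintype γ]
    (hg : HasUniformFibers g (Fintype.card γ * s)) (hh : HasUniformFibers h (Fintype.card β * s))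
    {b₀ : β} {c₀ : γ}
    (hne : ∀ b ≠ b₀, ∀ c ≠ c₀, (g ⁻¹' {b} ∩ h ⁻¹' {c}).ncard = s) :
    HasUniformFibers (fun x => (g x, h x)) s := by
  -- Completing every row `b ≠ b₀` leaves each column with at most one unknown entry.
  have hrow (b : β) (hb : b ≠ b₀) (c : γ) : (h ⁻¹' {c} ∩ g ⁻¹' {b}).ncard = s := by
    rw [Set.inter_comm]
    exact ncard_inter_preimage_eq_of_forall_ne (hg b) (hne b hb) c
  rintro ⟨b, c⟩
  rw [← Set.singleton_prod_singleton, Set.mk_preimage_prod, Set.inter_comm]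
  exact ncard_inter_preimage_eq_of_forall_ne (hh c) (fun b hb => hrow b hb c) b

end UniformFibers

section Translates

open scoped Pointwise

theorem ncard_smul_inter_smul {G : Type*} [Group G] (D : Set G) (x y : G) :
    (x • D ∩ y • D).ncard =
      Nat.card {pq : G × G // pq.1 ∈ D ∧ pq.2 ∈ D ∧ pq.1 * pq.2⁻¹ = y⁻¹ * x} := by
  have hmul {p e : G} (h : p * e⁻¹ = y⁻¹ * x) : y⁻¹ * (x * e) = p := by
    rw [mul_inv_eq_iff_eq_mul.1 h, mul_assoc]
  refine Nat.card_congr ⟨fun u => ⟨(y⁻¹ * u, x⁻¹ * u), Set.mem_smul_set_iff_inv_smul_mem.1 u.2.2,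
      Set.mem_smul_set_iff_inv_smul_mem.1 u.2.1, by group⟩,
    fun pq => ⟨x * pq.1.2, Set.smul_mem_smul_set pq.2.2.1, ?_⟩, fun u => by simp, ?_⟩
  · refine Set.mem_smul_set_iff_inv_smul_mem.2 ?_
    rw [smul_eq_mul, hmul pq.2.2.2]
    exact pq.2.1
  · rintro ⟨⟨p, e⟩, -, -, hpe⟩
    simp [hmul hpe]

theorem preimage_mul_image_units_val {M : Type*} [Monoid M] (a : Mˣ) (S : Set Mˣ) :
    (fun x : M => a * x) ⁻¹' (Units.val '' S) = Units.val '' (a⁻¹ • S) := by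
  ext x
  constructor
  · rintro ⟨u, hu, hux⟩
    exact ⟨a⁻¹ * u, Set.smul_mem_smul_set hu, by simp [hux]⟩
  · rintro ⟨_, ⟨u, hu, rfl⟩, rfl⟩
    exact ⟨u, hu, by simp⟩

end Translates

theorem exists_units_pow_eq_of_coprime {K : Type*} [GroupWithZero K] {d : ℕ}
    (hd : (Nat.card Kˣ).Coprime d) {b : K} (hb : b ≠ 0) : ∃ c : Kˣ, (c : K) ^ d = b := by
  obtain ⟨c, hc⟩ := (powCoprime hd).surjective (Units.mk0 b hb)
  exact ⟨c, by simpa using congrArg Units.val hc⟩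

section Balanced

variable {K L : Type*} [Field K] [Field L] {q n d : ℕ} {f g : L → K}

theorem IsBalanced.congr_s9 (hf : IsBalanced q n f) (hfg : ∀ x, x ≠ 0 → f x = g x) :
    IsBalanced q n g := by
  have hset (b : K) : {x : L | x ≠ 0 ∧ g x = b} = {x : L | x ≠ 0 ∧ f x = b} :=
    Set.ext fun x => and_congr_right fun hx => by rw [hfg x hx]
  simpa only [IsBalanced, hset] using hf

theorem IsDiffBalanced.congr_s9 (hf : IsDiffBalanced q n f) (hfg : ∀ x, x ≠ 0 → f x = g x) :
    IsDiffBalanced q n g := fun a ha ha1 =>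
  (hf a ha ha1).congr_s9 fun x hx => by rw [hfg x hx, hfg _ (mul_ne_zero ha hx)]

theorem ntt_congr (hfg : ∀ x, x ≠ 0 → f x = g x) {a : L} (ha : a ≠ 0) (b₁ b₂ : K) :
    Ntt f a b₁ b₂ = Ntt g a b₁ b₂ := by
  have hset : {x : L | x ≠ 0 ∧ f x = b₁ ∧ f (a * x) = b₂} =
      {x : L | x ≠ 0 ∧ g x = b₁ ∧ g (a * x) = b₂} :=
    Set.ext fun x => and_congr_right fun hx => by rw [hfg x hx, hfg _ (mul_ne_zero ha hx)]
  rw [Ntt, Ntt, hset]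

theorem IsBalanced.of_hasUniformFibers (hf0 : f 0 = 0)
    (hf : HasUniformFibers f (q ^ (n - 1))) : IsBalanced q n f :=
  ⟨hf0 ▸ hf.ncard_ne_and_eq 0,
    fun _ hb => hf.ncard_ne_and_eq_of_ne (hf0.symm ▸ hb)⟩

section Algebra

variable [Algebra K L]

theorem IsDHomogeneous.congr_s9 (hf : IsDHomogeneous q d f) (hfg : ∀ x, x ≠ 0 → f x = g x) :
    IsDHomogeneous q d g := by
  refine ⟨hf.1, fun c hc x hx => ?_⟩
  rw [← hfg x hx, ← hfg _ (mul_ne_zero (by simpa using hc) hx), hf.2 c hc x hx]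

theorem IsTwoTupleBalanced.congr_s9 (hf : IsTwoTupleBalanced q n f)
    (hfg : ∀ x, x ≠ 0 → f x = g x) : IsTwoTupleBalanced q n g := by
  refine ⟨fun a ha haK => ?_, fun c hc => ?_⟩
  · simpa only [ntt_congr hfg ha] using hf.1 a ha haK
  · have hc' : algebraMap K L c ≠ 0 := by simpa using hc
    obtain ⟨μ, hμ, hcount⟩ := hf.2 c hc
    refine ⟨μ, fun x hx => ?_, by simpa only [ntt_congr hfg hc'] using hcount⟩
    rw [← hfg x hx, ← hfg _ (mul_ne_zero hc' hx), hμ x hx]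

theorem IsTwoTupleBalanced.of_hasUniformFibers (hf0 : f 0 = 0)
    (hf : HasUniformFibers f (q ^ (n - 1))) (hhom : IsDHomogeneous q d f)
    (hpair : ∀ a : L, a ≠ 0 → (∀ c : K, algebraMap K L c ≠ a) →
      HasUniformFibers (fun x => (f x, f (a * x))) (q ^ (n - 2))) :
    IsTwoTupleBalanced q n f := by
  refine ⟨fun a ha haK => ?_, fun c hc => ⟨c ^ d, hhom.2 c hc, ?_⟩⟩
  · have hntt (b₁ b₂ : K) :
        Ntt f a b₁ b₂ = {x | x ≠ 0 ∧ (f x, f (a * x)) = (b₁, b₂)}.ncard := by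
      simp only [Ntt, Prod.mk.injEq, Nat.card_coe_set_eq]
    have hfa := hpair a ha haK
    refine ⟨?_, fun b₁ b₂ hb => ?_⟩
    · simpa only [hntt, mul_zero, hf0] using hfa.ncard_ne_and_eq 0
    · rw [hntt]
      exact hfa.ncard_ne_and_eq_of_ne (by simpa [hf0] using hb)
  · have hbal := IsBalanced.of_hasUniformFibers hf0 hf
    have hntt (b : K) :
        Ntt f (algebraMap K L c) b (c ^ d * b) = Nat.card {x : L | x ≠ 0 ∧ f x = b} := by
      refine congrArg (fun S : Set L => Nat.card S) (Set.ext fun x => and_congr_right fun hx => ?_)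
      rw [hhom.2 c hc x hx]
      exact and_iff_left_of_imp fun h => by rw [h]
    refine ⟨?_, fun b hb => (hntt b).trans (hbal.2 b hb), fun b₁ b₂ hb => ?_⟩
    · simpa only [mul_zero] using (hntt 0).trans hbal.1
    · rw [Ntt, Nat.card_eq_zero]
      exact Or.inl ⟨fun ⟨x, hx, h₁, h₂⟩ => hb (by rw [← h₂, hhom.2 c hc x hx, h₁])⟩

theorem IsDiffBalanced.of_hasUniformFibers [Fintype K] [Finite L] (hn : 2 ≤ n)
    (hK : Fintype.card K = q) (hf0 : f 0 = 0)
    (hf : HasUniformFibers f (q ^ (n - 1))) (hhom : IsDHomogeneous q d f)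
    (hpair : ∀ a : L, a ≠ 0 → (∀ c : K, algebraMap K L c ≠ a) →
      HasUniformFibers (fun x => (f x, f (a * x))) (q ^ (n - 2))) :
    IsDiffBalanced q n f := by
  intro a ha ha1
  by_cases haK : ∀ c : K, algebraMap K L c ≠ a
  · refine .of_hasUniformFibers (by simp) ?_
    have hexp : q ^ (n - 1) = Nat.card K * q ^ (n - 2) := by
      rw [Nat.card_eq_fintype_card, hK, ← pow_succ', show n - 2 + 1 = n - 1 by omega]
    exact hexp ▸ (hasUniformFibers_snd_sub_fst K).comp (hpair a ha haK)
  · obtain ⟨c, rfl⟩ := not_forall_not.1 haK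
    have hc : c ≠ 0 := by rintro rfl; simp at ha
    have hcd : c ^ d - 1 ≠ 0 := fun h => ha1 <| by
      have hgcd := pow_gcd_eq_one.2
        ⟨sub_eq_zero.1 h, FiniteField.pow_card_sub_one_eq_one c hc⟩
      rw [hK, hhom.1, pow_one] at hgcd
      rw [hgcd, map_one]
    have hscale := (hasUniformFibers_one_of_bijective (mulLeft_bijective₀ _ hcd)).comp hf
    rw [one_mul] at hscale
    refine (IsBalanced.of_hasUniformFibers (by simp [hf0]) hscale).congr_s9 fun x hx => ?_
    rw [hhom.2 c hc x hx, ← sub_one_mul, Function.comp_apply]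

end Algebra

end Balanced

section CosetPower

variable {K L : Type*} [Field K] [Field L] [Algebra K L] {C : Set Lˣ} {d : ℕ} {f : L → K}

/-- The function attached to `C` and the exponent `d`: it is `b ^ d` on the coset `b • C` for `b`
in `Kˣ` and vanishes elsewhere. It is total on `L`, and `f 0 = 0` because no coset contains `0`. -/
structure IsCosetPower (C : Set Lˣ) (d : ℕ) (f : L → K) : Prop where
  apply_mul (b : Kˣ) {u : Lˣ} : u ∈ C → f (algebraMap K L b * u) = (b : K) ^ d
  apply_eq_zero {x : L} : (∀ b : Kˣ, ∀ u ∈ C, algebraMap K L b * u ≠ x) → f x = 0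

namespace IsCosetPower

theorem apply_zero (hf : IsCosetPower C d f) : f 0 = 0 :=
  hf.apply_eq_zero fun b u _ => by simp

theorem apply_algebraMap_mul (hf : IsCosetPower C d f) (c : Kˣ) (x : L) :
    f (algebraMap K L c * x) = (c : K) ^ d * f x := by
  by_cases hx : ∃ b : Kˣ, ∃ u ∈ C, algebraMap K L b * u = x
  · obtain ⟨b, u, hu, rfl⟩ := hx
    rw [← mul_assoc, ← map_mul, ← Units.val_mul, hf.apply_mul _ hu, hf.apply_mul b hu,
      Units.val_mul, mul_pow]
  · push Not at hx
    rw [hf.apply_eq_zero hx, mul_zero]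
    refine hf.apply_eq_zero fun b u hu hbu => hx (c⁻¹ * b) u hu ?_
    rw [Units.val_mul, map_mul, mul_assoc, hbu, ← mul_assoc, ← map_mul,
      Units.inv_mul, map_one, one_mul]

open scoped Pointwise in
theorem preimage_singleton_pow (hf : IsCosetPower C d f) (hd : (Nat.card Kˣ).Coprime d) (b : Kˣ) :
    f ⁻¹' {(b : K) ^ d} =
      Units.val '' (Units.map (algebraMap K L).toMonoidHom b • C : Set Lˣ) := by
  ext x
  constructor
  · intro hx
    obtain ⟨c, u, hu, rfl⟩ : ∃ c : Kˣ, ∃ u ∈ C, algebraMap K L c * u = x := by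
      by_contra! hne
      exact pow_ne_zero d b.ne_zero (hx.symm.trans (hf.apply_eq_zero hne))
    obtain rfl : c = b := (powCoprime hd).injective
      (Units.ext (by simpa using (hf.apply_mul c hu).symm.trans hx))
    exact ⟨_, Set.smul_mem_smul_set hu, rfl⟩
  · rintro ⟨_, ⟨u, hu, rfl⟩, rfl⟩
    exact hf.apply_mul b hu

theorem hasUniformFibers [Fintype K] [Finite L] (hf : IsCosetPower C d f)
    (hd : (Nat.card Kˣ).Coprime d) (hL : Nat.card L = Fintype.card K * C.ncard) :
    HasUniformFibers f C.ncard := by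
  have hne (b : K) (hb : b ≠ 0) : (Set.univ ∩ f ⁻¹' {b}).ncard = C.ncard := by
    obtain ⟨c, rfl⟩ := exists_units_pow_eq_of_coprime hd hb
    rw [Set.univ_inter, hf.preimage_singleton_pow hd,
      Set.ncard_image_of_injective _ Units.val_injective, Set.ncard_smul_set]
  intro b
  rw [← Set.univ_inter (f ⁻¹' {b})]
  exact ncard_inter_preimage_eq_of_forall_ne ((Set.ncard_univ L).trans hL) hne b

open scoped Pointwise in
theorem ncard_preimage_inter_preimage_mul (hf : IsCosetPower C d f)
    (hd : (Nat.card Kˣ).Coprime d) (a : Lˣ) (b c : Kˣ) :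
    (f ⁻¹' {(b : K) ^ d} ∩ (fun x => f (a * x)) ⁻¹' {(c : K) ^ d}).ncard =
      Nat.card {pq : Lˣ × Lˣ // pq.1 ∈ C ∧ pq.2 ∈ C ∧ pq.1 * pq.2⁻¹ =
        (Units.map (algebraMap K L).toMonoidHom c)⁻¹ * a *
          Units.map (algebraMap K L).toMonoidHom b} := by
  set ι := Units.map (algebraMap K L).toMonoidHom
  have hshift : (fun x => f (a * x)) ⁻¹' {(c : K) ^ d} =
      Units.val '' ((a⁻¹ * ι c) • C : Set Lˣ) := by
    rw [← Set.preimage_preimage (g := f) (f := fun x => (a : L) * x), hf.preimage_singleton_pow hd,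
      preimage_mul_image_units_val, mul_smul]
  rw [hf.preimage_singleton_pow hd, hshift, ← Set.image_inter Units.val_injective,
    Set.ncard_image_of_injective _ Units.val_injective, ncard_smul_inter_smul, mul_inv_rev, inv_inv]

theorem hasUniformFibers_prodMk [Fintype K] [Finite L] {s : ℕ} (hf : IsCosetPower C d f)
    (hd : (Nat.card Kˣ).Coprime d) (hL : Nat.card L = Fintype.card K * C.ncard)
    (hCs : C.ncard = Fintype.card K * s)
    (hrep : ∀ g : Lˣ, g ∉ (Units.map (algebraMap K L).toMonoidHom).range →
      Nat.card {pq : Lˣ × Lˣ // pq.1 ∈ C ∧ pq.2 ∈ C ∧ pq.1 * pq.2⁻¹ = g} = s)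
    {a : Lˣ} (ha : a ∉ (Units.map (algebraMap K L).toMonoidHom).range) :
    HasUniformFibers (fun x => (f x, f (a * x))) s := by
  have huniform := hf.hasUniformFibers hd hL
  rw [hCs] at huniform
  have hshift := huniform.comp (hasUniformFibers_one_of_bijective a.mulLeft_bijective)
  rw [mul_one] at hshift
  refine huniform.prodMk_of_forall_ne hshift (b₀ := 0) (c₀ := 0) fun b hb c hc => ?_
  obtain ⟨b, rfl⟩ := exists_units_pow_eq_of_coprime hd hb
  obtain ⟨c, rfl⟩ := exists_units_pow_eq_of_coprime hd hc
  refine (hf.ncard_preimage_inter_preimage_mul hd a b c).trans (hrep _ ?_)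
  rwa [Subgroup.mul_mem_cancel_right _ (MonoidHom.mem_range.2 ⟨b, rfl⟩),
    Subgroup.mul_mem_cancel_left _ (inv_mem (MonoidHom.mem_range.2 ⟨c, rfl⟩))]

end IsCosetPower

theorem exists_isCosetPower_of_ne_zero
    (hf1 : ∀ b : K, b ≠ 0 → ∀ u : Lˣ, u ∈ C → f (algebraMap K L b * (u : L)) = b ^ d)
    (hf0 : ∀ x : L, x ≠ 0 →
      (∀ b : K, b ≠ 0 → ∀ u : Lˣ, u ∈ C → x ≠ algebraMap K L b * (u : L)) → f x = 0) :
    ∃ g : L → K, IsCosetPower C d g ∧ ∀ x, x ≠ 0 → g x = f x := by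
  classical
  have hne {x : L} (hx : x ≠ 0) : Function.update f 0 0 x = f x := Function.update_of_ne hx _ _
  refine ⟨Function.update f 0 0, ⟨fun b u hu => ?_, fun {x} hx => ?_⟩, fun x hx => hne hx⟩
  · rw [hne (by simp), hf1 b b.ne_zero u hu]
  · by_cases hx0 : x = 0
    · rw [hx0, Function.update_self]
    · rw [hne hx0]
      exact hf0 x hx0 fun b hb u hu hxu => hx (Units.mk0 b hb) u hu hxu.symm

end CosetPower

theorem stmt_9_general {K L : Type*} [Field K] [Field L] [Algebra K L] [Fintype K] [Fintype L]
    (n q : ℕ) (hn : 2 ≤ n) (hK : Fintype.card K = q) (hL : Fintype.card L = q ^ n)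
    (C : Set Lˣ)
    (hC : IsRelDiffSet C (Units.map (algebraMap K L).toMonoidHom).range
      ((q ^ n - 1) / (q - 1)) (q - 1) (q ^ (n - 1)) (q ^ (n - 2)))
    (d : ℕ) (hd : Nat.Coprime d (q - 1))
    (f : L → K)
    (hf1 : ∀ b : K, b ≠ 0 → ∀ u : Lˣ, u ∈ C → f (algebraMap K L b * (u : L)) = b ^ d)
    (hf0 : ∀ x : L, x ≠ 0 →
      (∀ b : K, b ≠ 0 → ∀ u : Lˣ, u ∈ C → x ≠ algebraMap K L b * (u : L)) → f x = 0) :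
    IsTwoTupleBalanced q n f ∧ IsDHomogeneous q d f ∧ IsDiffBalanced q n f := by
  obtain ⟨-, -, hcard : C.ncard = q ^ (n - 1), hrep, -⟩ := hC
  have hco : (Nat.card Kˣ).Coprime d := by
    rw [Nat.card_units, Nat.card_eq_fintype_card, hK]
    exact hd.symm
  obtain ⟨g, hg, hgf⟩ := exists_isCosetPower_of_ne_zero hf1 hf0
  have hLC : Nat.card L = Fintype.card K * C.ncard := by
    rw [Nat.card_eq_fintype_card, hL, hK, hcard, ← pow_succ', show n - 1 + 1 = n by omega]
  have hCq : C.ncard = Fintype.card K * q ^ (n - 2) := by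
    rw [hcard, hK, ← pow_succ', show n - 2 + 1 = n - 1 by omega]
  have hhom : IsDHomogeneous q d g :=
    ⟨hd, fun c hc x _ => hg.apply_algebraMap_mul (Units.mk0 c hc) x⟩
  have huniform : HasUniformFibers g (q ^ (n - 1)) := hcard ▸ hg.hasUniformFibers hco hLC
  have hpair (a : L) (ha : a ≠ 0) (haK : ∀ c : K, algebraMap K L c ≠ a) :
      HasUniformFibers (fun x => (g x, g (a * x))) (q ^ (n - 2)) :=
    hg.hasUniformFibers_prodMk hco hLC hCq hrep (a := Units.mk0 a ha)
      fun ⟨c, hc⟩ => haK c (congrArg Units.val hc)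
  exact ⟨(IsTwoTupleBalanced.of_hasUniformFibers hg.apply_zero huniform hhom hpair).congr_s9 hgf,
    hhom.congr_s9 hgf,
    (IsDiffBalanced.of_hasUniformFibers hn hK hg.apply_zero huniform hhom hpair).congr_s9 hgf⟩

/-- If `C ⊆ L^×` is a `((qⁿ−1)/(q−1), q−1, q^{n−1}, q^{n−2})` relative difference set
relative to `K^×`, `gcd(d, q−1) = 1`, and `f : L∖{0} → K` satisfies `f(b·x) = b^d` for
`b ∈ K∖{0}`, `x ∈ C`, and `f(x) = 0` for all other `x`, then `f` is two-tuple balanced;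
in particular `f` is `d`-homogeneous and difference balanced. -/
theorem stmt_9 {K L : Type*} [Field K] [Field L] [Algebra K L] [Fintype K] [Fintype L]
    (p m n q : ℕ) (hp : p.Prime) (hodd : Odd p) (hm : 1 ≤ m) (hn : 2 ≤ n)
    (hq : q = p ^ m) (hK : Fintype.card K = q) (hL : Fintype.card L = q ^ n)
    (C : Set Lˣ)
    (hC : IsRelDiffSet C (Units.map (algebraMap K L).toMonoidHom).range
      ((q ^ n - 1) / (q - 1)) (q - 1) (q ^ (n - 1)) (q ^ (n - 2)))
    (d : ℕ) (hd : Nat.Coprime d (q - 1))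
    (f : L → K)
    (hf1 : ∀ b : K, b ≠ 0 → ∀ u : Lˣ, u ∈ C → f (algebraMap K L b * (u : L)) = b ^ d)
    (hf0 : ∀ x : L, x ≠ 0 →
      (∀ b : K, b ≠ 0 → ∀ u : Lˣ, u ∈ C → x ≠ algebraMap K L b * (u : L)) → f x = 0) :
    IsTwoTupleBalanced q n f ∧ IsDHomogeneous q d f ∧ IsDiffBalanced q n f :=
  stmt_9_general n q hn hK hL C hC d hd f hf1 hf0
end

section
/- Let p be an odd prime, q = p^m, and let ℓ, n be integers with 2 ≤ ℓ, 2ℓ ≤ n, and ℓ dividing n. Let K ⊆ M ⊆ L be a tower of finite fields with |K| = q, |M| = q^ℓ, |L| = q^n (with fixed compatible embeddings). Suppose D₁ ⊆ L^× is a ((q^n−1)/(q^ℓ−1), q^ℓ−1, q^{n−ℓ}, q^{n−2ℓ}) relative difference set relative to M^× (the image of M∖{0} in L^×), and D₂ ⊆ M^× is a ((q^ℓ−1)/(q−1), q−1, q^{ℓ−1}, q^{ℓ−2}) relative difference set relative to K^× (the image of K∖{0} in M^×). Then the product set D := {d₁·d₂ : d₁ ∈ D₁, d₂ ∈ D₂}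 (with d₂ viewed in L^× via the embedding M → L) is a ((q^n−1)/(q−1), q−1, q^{n−1}, q^{n−2}) relative difference set in L^× relative to K^× (the image of K∖{0} in L^×). -/
/-!
In the group ring of `G`, write `A* = ∑ a⁻¹` over `a ∈ A`. If every element of `A B` factors
uniquely, then `(A B)(A B)* = (A A*)(B B*)`. Let `U` be the forbidden subgroup of `A` and let
`B ⊆ U`. The coefficients of `A A*` are `|A|` at `1`, zero on the rest of `U`, and constantly `λ₁`
off `U`. Hence those of `(A B)(A B)*` are `|A|` times those of `B B*` on `U`, and `λ₁ |B|²` off `U`.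
The product is a relative difference set as soon as `λ₁ |B|² = |A| λ₂`, and with the given
parameters both sides are `q ^ (n - 2)`.
-/

open scoped Pointwise

theorem natCard_mul_of_injOn {G : Type*} [Mul G] {A B : Set G}
    (hAB : Set.InjOn (fun z : G × G ↦ z.1 * z.2) (A ×ˢ B)) :
    Nat.card (A * B : Set G) = Nat.card A * Nat.card B := by
  rw [← Set.image_mul_prod, Nat.card_image_of_injOn hAB, Nat.card_congr (Equiv.Set.prod A B),
    Nat.card_prod]

section RepCount

variable {G : Type*}

/-- The number of representations `g = x * y⁻¹` with `x, y ∈ D`, i.e. the coefficient of `g` in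
`D D⁽⁻¹⁾` in the group ring. It is stated so as to unfold to the counts in `IsRelDiffSet`. -/
noncomputable def repCount [Group G] (D : Set G) (g : G) : ℕ :=
  Nat.card {pq : G × G // pq.1 ∈ D ∧ pq.2 ∈ D ∧ pq.1 * pq.2⁻¹ = g}

section Group

variable [Group G] {D : Set G}

theorem repCount_eq_zero_iff [Finite G] {g : G} :
    repCount D g = 0 ↔ ∀ x ∈ D, ∀ y ∈ D, x * y⁻¹ ≠ g := by
  rw [repCount, Finite.card_eq_zero_iff, isEmpty_subtype, Prod.forall]
  exact ⟨fun h x hx y hy hxy ↦ h x y ⟨hx, hy, hxy⟩,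
    fun h x y hxy ↦ h x hxy.1 y hxy.2.1 hxy.2.2⟩

theorem repCount_eq_zero_of_notMem [Finite G] {U : Subgroup G} (hD : D ⊆ U) {g : G}
    (hg : g ∉ U) : repCount D g = 0 :=
  repCount_eq_zero_iff.mpr fun _ hx _ hy hxy ↦
    hg (hxy ▸ U.mul_mem (hD hx) (U.inv_mem (hD hy)))

theorem repCount_one : repCount D 1 = Nat.card D :=
  Nat.card_congr
    { toFun := fun z ↦ ⟨z.1.1, z.2.1⟩
      invFun := fun x ↦ ⟨(x, x), x.2, x.2, mul_inv_cancel _⟩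
      left_inv := fun ⟨_, _, _, h⟩ ↦ Subtype.ext (Prod.ext rfl (mul_inv_eq_one.mp h))
      right_inv := fun _ ↦ rfl }

theorem sum_repCount [Fintype G] : ∑ g, repCount D g = Nat.card D ^ 2 := by
  simp only [repCount, ← Nat.card_sigma, sq, ← Nat.card_prod]
  exact Nat.card_congr
    { toFun := fun z ↦ (⟨z.2.1.1, z.2.2.1⟩, ⟨z.2.1.2, z.2.2.2.1⟩)
      invFun := fun z ↦ ⟨z.1 * (z.2 : G)⁻¹, (z.1, z.2), z.1.2, z.2.2, rfl⟩
      left_inv := by rintro ⟨_, _, _, _, rfl⟩; rfl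
      right_inv := fun _ ↦ rfl }

theorem repCount_image {H : Type*} [Group H] {φ : H →* G} (hφ : Function.Injective φ)
    (D : Set H) (h : H) : repCount (φ '' D) (φ h) = repCount D h := by
  refine (Nat.card_eq_of_bijective
    (fun z ↦ ⟨(φ z.1.1, φ z.1.2), ⟨_, z.2.1, rfl⟩, ⟨_, z.2.2.1, rfl⟩,
      by rw [← map_inv, ← map_mul, z.2.2.2]⟩) ⟨?_, ?_⟩).symm
  · rintro ⟨⟨a, b⟩, _⟩ ⟨⟨a', b'⟩, _⟩ heq
    simpa only [Subtype.mk.injEq, Prod.mk.injEq, hφ.eq_iff] using heq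
  · rintro ⟨⟨u, v⟩, ⟨a, ha, hu⟩, ⟨b, hb, hv⟩, huv⟩
    obtain rfl : φ a = u := hu
    obtain rfl : φ b = v := hv
    exact ⟨⟨(a, b), ha, hb, hφ (by rw [map_mul, map_inv, huv])⟩, rfl⟩

end Group

section CommGroup

variable [CommGroup G] {A B : Set G}

theorem repCount_mul [Fintype G] (hAB : Set.InjOn (fun z : G × G ↦ z.1 * z.2) (A ×ˢ B)) (g : G) :
    repCount (A * B) g = ∑ u, repCount A (g * u⁻¹) * repCount B u := by
  simp only [repCount, ← Nat.card_prod, ← Nat.card_sigma]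
  refine (Nat.card_eq_of_bijective
    (fun ⟨_, ⟨(x, y), hx, hy, hxy⟩, ⟨(a, b), ha, hb, hab⟩⟩ ↦
      ⟨(x * a, y * b), Set.mul_mem_mul hx ha, Set.mul_mem_mul hy hb,
        by rw [mul_inv, mul_mul_mul_comm, hxy, hab, inv_mul_cancel_right]⟩) ⟨?_, ?_⟩).symm
  · rintro ⟨_, ⟨⟨x, y⟩, hx, hy, _⟩, ⟨a, b⟩, ha, hb, rfl⟩
      ⟨_, ⟨⟨x', y'⟩, hx', hy', _⟩, ⟨a', b'⟩, ha', hb', rfl⟩ heq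
    simp only [Subtype.mk.injEq, Prod.mk.injEq] at heq
    obtain ⟨rfl, rfl⟩ := Prod.mk.inj (hAB (Set.mk_mem_prod hx ha) (Set.mk_mem_prod hx' ha') heq.1)
    obtain ⟨rfl, rfl⟩ := Prod.mk.inj (hAB (Set.mk_mem_prod hy hb) (Set.mk_mem_prod hy' hb') heq.2)
    rfl
  · rintro ⟨⟨u, v⟩, ⟨x, hx, a, ha, hu⟩, ⟨y, hy, b, hb, hv⟩, huv⟩
    obtain rfl : x * a = u := hu
    obtain rfl : y * b = v := hv
    refine ⟨⟨a * b⁻¹, ⟨(x, y), hx, hy, eq_mul_inv_of_mul_eq ?_⟩, (a, b), ha, hb, rfl⟩, rfl⟩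
    rw [← huv, mul_inv, mul_mul_mul_comm]

variable [Finite G] {U : Subgroup G}

theorem injOn_mul_of_repCount_eq_zero (hA : ∀ u ∈ U, u ≠ 1 → repCount A u = 0) (hB : B ⊆ U) :
    Set.InjOn (fun z : G × G ↦ z.1 * z.2) (A ×ˢ B) := by
  rintro ⟨x, a⟩ ⟨hx, ha⟩ ⟨y, b⟩ ⟨hy, hb⟩ (h : x * a = y * b)
  have hquot : x * y⁻¹ = b * a⁻¹ := by
    rw [← div_eq_mul_inv, ← div_eq_mul_inv, div_eq_div_iff_mul_eq_mul, h, mul_comm]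
  have hmem : x * y⁻¹ ∈ U := hquot ▸ U.mul_mem (hB hb) (U.inv_mem (hB ha))
  have hxy : x = y := by
    by_contra hne
    exact repCount_eq_zero_iff.mp (hA _ hmem (mt mul_inv_eq_one.mp hne)) x hx y hy rfl
  subst hxy
  rw [mul_left_cancel h]

theorem repCount_mul_of_mem (hA : ∀ u ∈ U, u ≠ 1 → repCount A u = 0) (hB : B ⊆ U) {g : G}
    (hg : g ∈ U) : repCount (A * B) g = Nat.card A * repCount B g := by
  have := Fintype.ofFinite G
  rw [repCount_mul (injOn_mul_of_repCount_eq_zero hA hB), Finset.sum_eq_single g,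
    mul_inv_cancel, repCount_one]
  · intro u _ hu
    by_cases huU : u ∈ U
    · rw [hA _ (U.mul_mem hg (U.inv_mem huU)) (mt mul_inv_eq_one.mp hu.symm), zero_mul]
    · rw [repCount_eq_zero_of_notMem hB huU, mul_zero]
  · exact fun h ↦ absurd (Finset.mem_univ g) h

theorem repCount_mul_of_notMem {lam : ℕ} (hA₀ : ∀ u ∈ U, u ≠ 1 → repCount A u = 0)
    (hA : ∀ u ∉ U, repCount A u = lam) (hB : B ⊆ U) {g : G} (hg : g ∉ U) :
    repCount (A * B) g = lam * Nat.card B ^ 2 := by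
  have := Fintype.ofFinite G
  rw [repCount_mul (injOn_mul_of_repCount_eq_zero hA₀ hB), ← sum_repCount, Finset.mul_sum]
  refine Finset.sum_congr rfl fun u _ ↦ ?_
  by_cases huU : u ∈ U
  · rw [hA _ (mt (U.mul_mem_cancel_right (U.inv_mem huU)).mp hg)]
  · rw [repCount_eq_zero_of_notMem hB huU, mul_zero, mul_zero]

end CommGroup

end RepCount

section Product

variable {G H : Type*} [CommGroup G] [Finite G] [Group H] {φ : H →* G} {D₁ : Set G} {D₂ : Set H}
  {N : Subgroup H}

theorem IsRelDiffSet.mul_image {m₁ n₁ k₁ lam₁ m₂ n₂ k₂ lam₂ : ℕ} (hφ : Function.Injective φ)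
    (hD₁ : IsRelDiffSet D₁ φ.range m₁ n₁ k₁ lam₁) (hD₂ : IsRelDiffSet D₂ N m₂ n₂ k₂ lam₂)
    (hlam : lam₁ * k₂ ^ 2 = k₁ * lam₂) :
    IsRelDiffSet (D₁ * φ '' D₂) (N.map φ) (m₁ * m₂) n₂ (k₁ * k₂) (k₁ * lam₂) := by
  obtain ⟨hG, hrange, rfl, hout₁, hin₁⟩ := hD₁
  obtain ⟨hH, hN, rfl, hout₂, hin₂⟩ := hD₂
  have hsub : φ '' D₂ ⊆ φ.range := Set.image_subset_range φ D₂
  have hcard : Nat.card (φ '' D₂) = Nat.card D₂ := Nat.card_image_of_injective hφ D₂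
  have hrep (h : H) : repCount (D₁ * φ '' D₂) (φ h) = Nat.card D₁ * repCount D₂ h := by
    rw [repCount_mul_of_mem hin₁ hsub ⟨h, rfl⟩, repCount_image hφ]
  refine ⟨?_, ?_, ?_, fun g hg ↦ ?_, ?_⟩
  · rw [mul_assoc, ← hH, hG, ← hrange, Nat.card_congr (φ.ofInjective hφ).toEquiv]
  · rw [Subgroup.card_map_of_injective hφ, hN]
  · rw [natCard_mul_of_injOn (injOn_mul_of_repCount_eq_zero hin₁ hsub), hcard]
  · by_cases hgφ : g ∈ φ.range
    · obtain ⟨h, rfl⟩ := hgφ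
      exact (hrep h).trans
        (congrArg _ (hout₂ h fun hh ↦ hg (Subgroup.mem_map_of_mem φ hh)))
    · exact (repCount_mul_of_notMem hin₁ hout₁ hsub hgφ).trans (hcard ▸ hlam)
  · rintro _ ⟨h, hh, rfl⟩ hne
    exact (hrep h).trans (mul_eq_zero_of_right _ (hin₂ h hh fun h1 ↦ hne (h1 ▸ map_one φ)))

theorem stmt_10_general {q ℓ n : ℕ} (hℓ : 2 ≤ ℓ) (h2ℓ : 2 * ℓ ≤ n) (hdvd : ℓ ∣ n)
    (hφ : Function.Injective φ)
    (hD₁ : IsRelDiffSet D₁ φ.range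
      ((q ^ n - 1) / (q ^ ℓ - 1)) (q ^ ℓ - 1) (q ^ (n - ℓ)) (q ^ (n - 2 * ℓ)))
    (hD₂ : IsRelDiffSet D₂ N
      ((q ^ ℓ - 1) / (q - 1)) (q - 1) (q ^ (ℓ - 1)) (q ^ (ℓ - 2))) :
    IsRelDiffSet {w : G | ∃ d₁ ∈ D₁, ∃ d₂ ∈ D₂, w = d₁ * φ d₂} (N.map φ)
      ((q ^ n - 1) / (q - 1)) (q - 1) (q ^ (n - 1)) (q ^ (n - 2)) := by
  have hm : (q ^ n - 1) / (q ^ ℓ - 1) * ((q ^ ℓ - 1) / (q - 1)) = (q ^ n - 1) / (q - 1) :=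
    Nat.div_mul_div (Nat.pow_sub_one_dvd_pow_sub_one q hdvd) (Nat.sub_one_dvd_pow_sub_one q ℓ)
  have hk : q ^ (n - ℓ) * q ^ (ℓ - 1) = q ^ (n - 1) := by
    rw [← pow_add, show n - ℓ + (ℓ - 1) = n - 1 by lia]
  have hlam : q ^ (n - ℓ) * q ^ (ℓ - 2) = q ^ (n - 2) := by
    rw [← pow_add, show n - ℓ + (ℓ - 2) = n - 2 by lia]
  have hbalance : q ^ (n - 2 * ℓ) * (q ^ (ℓ - 1)) ^ 2 = q ^ (n - ℓ) * q ^ (ℓ - 2) := by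
    rw [hlam, ← pow_mul, ← pow_add, show n - 2 * ℓ + (ℓ - 1) * 2 = n - 2 by lia]
  have hset : {w : G | ∃ d₁ ∈ D₁, ∃ d₂ ∈ D₂, w = d₁ * φ d₂} = D₁ * φ '' D₂ := by
    ext w
    simp only [Set.mem_ofPred_eq, Set.mem_mul, Set.exists_mem_image, eq_comm]
  rw [hset, ← hm, ← hk, ← hlam]
  exact hD₁.mul_image hφ hD₂ hbalance

end Product

theorem map_range_unitsMap_algebraMap (K M L : Type*) [CommSemiring K] [CommSemiring M]
    [Semiring L] [Algebra K M] [Algebra M L] [Algebra K L] [IsScalarTower K M L] :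
    (Units.map (algebraMap K M).toMonoidHom).range.map (Units.map (algebraMap M L).toMonoidHom) =
      (Units.map (algebraMap K L).toMonoidHom).range := by
  rw [MonoidHom.map_range, ← Units.map_comp, IsScalarTower.algebraMap_eq K M L]
  rfl

/-- Product construction (Gordon–Mills–Welch / No): if `D₁ ⊆ L^×` is a relative
difference set relative to `M^×` and `D₂ ⊆ M^×` is a relative difference set relative
to `K^×`, then `D₁·D₂ ⊆ L^×` is a `((qⁿ−1)/(q−1), q−1, q^{n−1}, q^{n−2})` relative
difference set relative to `K^×`. -/
theorem stmt_10 {K M L : Type*} [Field K] [Field M] [Field L]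
    [Algebra K M] [Algebra M L] [Algebra K L] [IsScalarTower K M L]
    [Fintype K] [Fintype M] [Fintype L]
    (p mm n ℓ q : ℕ) (hp : p.Prime) (hodd : Odd p) (hmm : 1 ≤ mm)
    (hℓ : 2 ≤ ℓ) (h2ℓ : 2 * ℓ ≤ n) (hdvd : ℓ ∣ n)
    (hq : q = p ^ mm) (hK : Fintype.card K = q) (hM : Fintype.card M = q ^ ℓ)
    (hL : Fintype.card L = q ^ n)
    (D₁ : Set Lˣ) (D₂ : Set Mˣ)
    (hD₁ : IsRelDiffSet D₁ (Units.map (algebraMap M L).toMonoidHom).range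
      ((q ^ n - 1) / (q ^ ℓ - 1)) (q ^ ℓ - 1) (q ^ (n - ℓ)) (q ^ (n - 2 * ℓ)))
    (hD₂ : IsRelDiffSet D₂ (Units.map (algebraMap K M).toMonoidHom).range
      ((q ^ ℓ - 1) / (q - 1)) (q - 1) (q ^ (ℓ - 1)) (q ^ (ℓ - 2))) :
    IsRelDiffSet
      {w : Lˣ | ∃ d₁ ∈ D₁, ∃ d₂ ∈ D₂, w = d₁ * Units.map (algebraMap M L).toMonoidHom d₂}
      (Units.map (algebraMap K L).toMonoidHom).range
      ((q ^ n - 1) / (q - 1)) (q - 1) (q ^ (n - 1)) (q ^ (n - 2)) := by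
  rw [← map_range_unitsMap_algebraMap K M L]
  exact stmt_10_general hℓ h2ℓ hdvd (Units.map_injective (algebraMap M L).injective) hD₁ hD₂
end

section
/- Let p be an odd prime and n ≥ 1. Let L be a finite field with |L| = p^n, let K = 𝔽_p, and let G = L^× × K be the group with operation (x, y)(x', y') = (xx', y + y'). Let D ⊆ G be a generalized difference set with parameters (p(p^n−1); p, p^n−1; p^n−1, p^{n−1}; 0, p^{n−1}−1) relative to N₁ = {1} × K and N₂ = L^× × {0}. Then for every i ∈ {1, …, p−1}, setting t_i = p + i(p^n−1), the pair (1, t_i) is a numerical multiplier of D: there exists (a, c) ∈ G such that {(x, t_i·y) : (x, y) ∈ D} = {(a·x, y + c) : (x, y) ∈ D}, where t_i·y denotes the scalar multiple of y ∈ 𝔽_p by the integer t_i. -/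
/-- The number of representations of `(a, b)` as a "difference" `d₁ d₂⁻¹` of two
distinct elements of `D` in the group `G = L^× × K` with operation
`(x, y)(x', y') = (xx', y + y')`. -/
noncomputable def gdsCount {K L : Type*} [Field K] [Field L]
    (D : Set (Lˣ × K)) (a : Lˣ) (b : K) : ℕ :=
  Nat.card {pq : (Lˣ × K) × (Lˣ × K) //
    pq.1 ∈ D ∧ pq.2 ∈ D ∧ pq.1 ≠ pq.2 ∧ pq.1.1 * pq.2.1⁻¹ = a ∧ pq.1.2 - pq.2.2 = b}

/-!
`D` is the graph of a function `f : H → K`, where `H = Lˣ`, and `q = |H| + 1` is a power of `p`.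
For an injective additive character `e` of `K`, the sums `X = ∑ h, χ h * e (f h)` satisfy
`X * conj X = q` if `χ ≠ 1`, and have absolute value `1` if `χ = 1`.

Let `s` be prime to `p` and let `σ` be the automorphism of the cyclotomic integers that fixes the
`|H|`-th roots of unity and raises the `|K|`-th ones to the power `s`. It acts trivially modulo
every prime above `p`, so it preserves all divisors of `q`: `X ∣ σ X`. Hence `q` divides
`σ X * conj X = ∑ a, χ a * C a` for `χ ≠ 1`, where `C a = ∑ x, e (s • f (a * x) - f x)`. Put
`η = ∑ a, C a`, which has absolute value `1`. Adding `η` to every `C a` makes the divisibility hold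
for `χ = 1` too, and Fourier inversion gives `q ∣ C a + η` for all `a`.

Some `C a + η` is nonzero. All conjugates of it have absolute value at most `|H| + 1 = q`, so by
Kronecker's theorem it is `q` times a root of unity. Equality in the triangle inequality then forces
`e (s • f (a * x) - f x) = η` for every `x`, so `s • f (a * x) - f x` is constant.
-/

open NumberField

section RingHom

variable {S : Type*} [CommRing S]

theorem map_le_of_forall_prime_map_le [IsDedekindDomain S] {σ : S →+* S} {I : Ideal S}
    (hσ : ∀ P : Ideal S, P.IsPrime → I ≤ P → P.map σ ≤ P) : I.map σ ≤ I := by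
  induction I using UniqueFactorizationMonoid.induction_on_prime with
  | h₁ => simp
  | h₂ I hI => simp [Ideal.isUnit_iff.mp hI]
  | h₃ I P _ hP ih =>
    rw [Ideal.map_mul]
    exact Ideal.mul_mono (hσ P (Ideal.isPrime_of_prime hP) Ideal.mul_le_left)
      (ih fun Q hQ hIQ ↦ hσ Q hQ (Ideal.mul_le_right.trans hIQ))

theorem dvd_map_of_forall_prime_map_le [IsDedekindDomain S] {σ : S →+* S} {x : S}
    (hσ : ∀ P : Ideal S, P.IsPrime → x ∈ P → P.map σ ≤ P) : x ∣ σ x := by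
  have h : (Ideal.span {x}).map σ ≤ Ideal.span {x} :=
    map_le_of_forall_prime_map_le fun P hP hx ↦
      hσ P hP ((Ideal.span_singleton_le_iff_mem P).mp hx)
  rwa [Ideal.map_span, Set.image_singleton, Ideal.span_singleton_le_span_singleton] at h

/- The Frobenius map of `S ⧸ P` is injective, so `σ z` and `z` agree modulo `P`. -/
theorem map_sub_self_mem_of_map_pow_eq {σ : S →+* S} {z : S} (hz : Algebra.adjoin ℤ {z} = ⊤)
    {p r : ℕ} (hp : p.Prime) (hσ : σ (z ^ p ^ r) = z ^ p ^ r) {P : Ideal S} (hP : P.IsPrime)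
    (hpP : (p : S) ∈ P) (x : S) : σ x - x ∈ P := by
  have : Fact p.Prime := ⟨hp⟩
  have : CharP (S ⧸ P) p := by
    rw [CharP.charP_iff_prime_eq_zero hp, ← map_natCast (Ideal.Quotient.mk P)]
    exact Ideal.Quotient.eq_zero_iff_mem.mpr hpP
  let π := Ideal.Quotient.mk P
  have hπz : π (σ z) = π z := by
    apply iterateFrobenius_inj (S ⧸ P) p r
    simp only [iterateFrobenius_def, ← map_pow, hσ]
  have hπ : (π.comp σ).toIntAlgHom = π.toIntAlgHom :=
    AlgHom.ext_of_adjoin_eq_top hz (Set.eqOn_singleton.mpr hπz)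
  exact Ideal.Quotient.eq.mp (DFunLike.congr_fun hπ x)

theorem dvd_map_of_dvd_prime_pow [IsDedekindDomain S] {σ : S →+* S} {z : S}
    (hz : Algebra.adjoin ℤ {z} = ⊤) {p r : ℕ} (hp : p.Prime) (hσ : σ (z ^ p ^ r) = z ^ p ^ r)
    {k : ℕ} {x : S} (hx : x ∣ (p : S) ^ k) : x ∣ σ x := by
  refine dvd_map_of_forall_prime_map_le fun P hP hxP ↦ Ideal.map_le_iff_le_comap.mpr fun y hy ↦ ?_
  have hpP : (p : S) ∈ P := hP.mem_of_pow_mem k (P.mem_of_dvd hx hxP)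
  exact (P.sub_mem_iff_left hy).mp (map_sub_self_mem_of_map_pow_eq hz hp hσ hP hpP y)

end RingHom

section Cyclotomic

variable {E : Type*} [Field E] [NumberField E]

theorem hasEnoughRootsOfUnity_ringOfIntegers {N m : ℕ} [NeZero N] [IsCyclotomicExtension {N} ℚ E]
    (hm : m ∣ N) : HasEnoughRootsOfUnity (𝓞 E) m :=
  have : HasEnoughRootsOfUnity (𝓞 E) N :=
    { prim := ⟨_, (IsCyclotomicExtension.zeta_spec N ℚ E).toInteger_isPrimitiveRoot⟩
      cyc := rootsOfUnity.isCyclic _ _ }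
  .of_dvd _ hm

theorem exists_ringHom_apply_eq_pow {N k : ℕ} [NeZero N] [IsCyclotomicExtension {N} ℚ E]
    (hk : k.Coprime N) : ∃ σ : 𝓞 E →+* 𝓞 E, ∀ x, x ^ N = 1 → σ x = x ^ k := by
  let τ := (IsCyclotomicExtension.Rat.galEquivZMod N E).symm (ZMod.unitOfCoprime k hk)
  refine ⟨MulSemiringAction.toRingHom _ (𝓞 E) τ, fun x hx ↦ ?_⟩
  rw [MulSemiringAction.toRingHom_apply,
    IsCyclotomicExtension.Rat.galEquivZMod_smul_of_pow_eq N E τ hx, MulEquiv.apply_symm_apply,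
    ZMod.coe_unitOfCoprime, ZMod.val_natCast, ← pow_mod_orderOf, Nat.mod_mod_of_dvd,
    pow_mod_orderOf]
  exact orderOf_dvd_of_pow_eq_one hx

theorem exists_ringHom_apply_eq_pow_and_apply_eq_self {A B s : ℕ} [NeZero (A * B)]
    [IsCyclotomicExtension {A * B} ℚ E] (hAB : A.Coprime B) (hs : s.Coprime A) :
    ∃ σ : 𝓞 E →+* 𝓞 E, (∀ x, x ^ A = 1 → σ x = x ^ s) ∧ ∀ x, x ^ B = 1 → σ x = x := by
  obtain ⟨k, hkA, hkB⟩ := Nat.chineseRemainder hAB s 1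
  have hk : k.Coprime (A * B) := by
    refine Nat.Coprime.mul_right ?_ ?_
    · rwa [Nat.Coprime, hkA.gcd_eq]
    · rw [Nat.Coprime, hkB.gcd_eq, Nat.gcd_one_left]
  obtain ⟨σ, hσ⟩ := exists_ringHom_apply_eq_pow (E := E) hk
  refine ⟨σ, fun x hx ↦ ?_, fun x hx ↦ ?_⟩
  · rw [hσ x (by rw [pow_mul, hx, one_pow])]
    exact pow_eq_pow_of_modEq hkA hx
  · rw [hσ x (by rw [pow_mul', hx, one_pow])]
    simpa using pow_eq_pow_of_modEq hkB hx

theorem dvd_map_of_dvd_prime_pow_of_apply_eq_self {p r B : ℕ} (hp : p.Prime) [NeZero (p ^ r * B)]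
    [IsCyclotomicExtension {p ^ r * B} ℚ E] {σ : 𝓞 E →+* 𝓞 E} (hσ : ∀ x, x ^ B = 1 → σ x = x)
    {k : ℕ} {x : 𝓞 E} (hx : x ∣ (p : 𝓞 E) ^ k) : x ∣ σ x := by
  have hζ := IsCyclotomicExtension.zeta_spec (p ^ r * B) ℚ E
  refine dvd_map_of_dvd_prime_pow (IsCyclotomicExtension.Rat.adjoin_singleton_eq_top hζ)
    (r := r) hp (hσ _ ?_) hx
  rw [← pow_mul, hζ.toInteger_isPrimitiveRoot.pow_eq_one]

theorem norm_map_eq_of_dvd_of_forall_norm_map_le {x : 𝓞 E} {q : ℕ} (hx : x ≠ 0)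
    (hq : (q : 𝓞 E) ∣ x) (hle : ∀ φ : 𝓞 E →+* ℂ, ‖φ x‖ ≤ q) (φ : 𝓞 E →+* ℂ) : ‖φ x‖ = q := by
  obtain ⟨y, rfl⟩ := hq
  have hq_pos : (0 : ℝ) < q := Nat.cast_pos.mpr (Nat.pos_of_ne_zero fun h ↦ by simp [h] at hx)
  have hnorm (φ : 𝓞 E →+* ℂ) : ‖φ (q * y)‖ = q * ‖φ y‖ := by simp
  have hy_le (ψ : E →+* ℂ) : ‖ψ y‖ ≤ 1 := by
    have h := hle (ψ.comp (algebraMap (𝓞 E) E))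
    rw [hnorm] at h
    exact le_of_mul_le_mul_left (h.trans_eq (mul_one _).symm) hq_pos
  obtain ⟨n, hn, hyn⟩ := Embeddings.pow_eq_one_of_norm_le_one E ℂ
    (RingOfIntegers.coe_ne_zero_iff.mpr (right_ne_zero_of_mul hx)) y.isIntegral_coe hy_le
  have hφy : ‖φ y‖ = 1 := by
    refine Complex.norm_eq_one_of_pow_eq_one ?_ hn.ne'
    rw [← map_pow, RingOfIntegers.coe_injective (a₁ := y ^ n) (a₂ := 1) (by simpa using hyn),
      map_one]
  rw [hnorm, hφy, mul_one]

end Cyclotomic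

theorem forall_eq_of_card_add_one_le_norm_add_sum {ι V : Type*} [Fintype ι] [NormedAddCommGroup V]
    [NormedSpace ℝ V] [StrictConvexSpace ℝ V] {u : ι → V} {v : V} (hu : ∀ i, ‖u i‖ = 1)
    (hv : ‖v‖ = 1) (h : (Fintype.card ι + 1 : ℝ) ≤ ‖v + ∑ i, u i‖) (i : ι) : u i = v := by
  classical
  have hrest : ‖∑ j ∈ Finset.univ.erase i, u j‖ ≤ Fintype.card ι - 1 := by
    refine (norm_sum_le _ _).trans_eq ?_
    simp [hu, Nat.cast_sub (Fintype.card_pos_iff.mpr ⟨i⟩ : 1 ≤ Fintype.card ι)]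
  have hsplit : ‖v + ∑ j, u j‖ ≤ ‖v + u i‖ + ‖∑ j ∈ Finset.univ.erase i, u j‖ := by
    rw [← Finset.add_sum_erase _ _ (Finset.mem_univ i), ← add_assoc]
    exact norm_add_le _ _
  have hadd : ‖v + u i‖ = ‖v‖ + ‖u i‖ := by
    refine le_antisymm (norm_add_le _ _) ?_
    rw [hu, hv]
    linarith
  exact (eq_of_norm_eq_of_norm_add_eq (hv.trans (hu i).symm) hadd).symm

theorem exists_addChar_injective {K S : Type*} [AddGroup K] [IsAddCyclic K] [Finite K]
    [CommMonoid S] [HasEnoughRootsOfUnity S (Nat.card K)] :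
    ∃ e : AddChar K S, Function.Injective e := by
  have : NeZero (Nat.card K) := ⟨Nat.card_pos.ne'⟩
  obtain ⟨ζ, hζ⟩ := HasEnoughRootsOfUnity.exists_primitiveRoot S (Nat.card K)
  let ψ := AddChar.zmodChar (Nat.card K) hζ.pow_eq_one
  have hψ : Function.Injective ψ := fun a b hab ↦
    ZMod.val_injective _ (hζ.pow_inj a.val_lt b.val_lt hab)
  let ε := (zmodAddCyclicAddEquiv ‹IsAddCyclic K›).symm
  exact ⟨ψ.compAddMonoidHom ε.toAddMonoidHom, hψ.comp ε.injective⟩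

section CharacterSums

variable {H K S : Type*} [CommGroup H] [Fintype H] [CommRing S]

theorem sum_monoidHom_units_eq_zero [IsDomain S] {χ : H →* Sˣ} (hχ : χ ≠ 1) :
    ∑ a, (χ a : S) = 0 := by
  refine sum_hom_units_eq_zero ((Units.coeHom S).comp χ) fun h ↦ hχ ?_
  ext a
  exact DFunLike.congr_fun h a

theorem sum_apply_monoidHom_units [DecidableEq H] [IsDomain S]
    [HasEnoughRootsOfUnity S (Monoid.exponent H)] [Fintype (H →* Sˣ)] (a : H) :
    ∑ χ : H →* Sˣ, (χ a : S) = if a = 1 then (Fintype.card H : S) else 0 := by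
  split_ifs with ha
  · have h := CommGroup.card_monoidHom_of_hasEnoughRootsOfUnity H S
    rw [Nat.card_eq_fintype_card, Nat.card_eq_fintype_card] at h
    simp [ha, ← h]
  · obtain ⟨ψ, hψ⟩ := CommGroup.exists_apply_ne_one_of_hasEnoughRootsOfUnity H S ha
    have h : (ψ a : S) * ∑ χ : H →* Sˣ, (χ a : S) = ∑ χ : H →* Sˣ, (χ a : S) := by
      rw [Finset.mul_sum, ← Equiv.sum_comp (Equiv.mulLeft ψ) fun χ : H →* Sˣ ↦ (χ a : S)]
      simp
    exact eq_zero_of_mul_eq_self_left (by simpa using hψ) h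

theorem dvd_card_mul_of_forall_dvd_sum [IsDomain S] [HasEnoughRootsOfUnity S (Monoid.exponent H)]
    {d : S} {g : H → S} (hg : ∀ χ : H →* Sˣ, d ∣ ∑ b, χ b * g b) (a : H) :
    d ∣ Fintype.card H * g a := by
  classical
  have := Fintype.ofFinite (H →* Sˣ)
  have inversion : Fintype.card H * g a = ∑ χ : H →* Sˣ, (χ a⁻¹ : S) * ∑ b, χ b * g b := by
    simp_rw [Finset.mul_sum]
    rw [Finset.sum_comm]
    simp_rw [← mul_assoc, ← Units.val_mul, ← map_mul, ← Finset.sum_mul,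
      sum_apply_monoidHom_units, inv_mul_eq_one]
    simp
  rw [inversion]
  exact Finset.dvd_sum fun χ _ ↦ (hg χ).mul_left _

variable [AddCommGroup K]

/-- The character sum `∑ h, χ h * e (f h)` of a function `f` between two groups, for a
multiplicative character `χ` of the domain and an additive character `e` of the codomain. -/
def twistedSum (χ : H →* Sˣ) (e : AddChar K S) (f : H → K) : S :=
  ∑ h, χ h * e (f h)

/-- The cross-correlation at shift `a` of the `S`-valued functions `e ∘ f` and `e ∘ g`. The
conjugate of `e ∘ g` is written as `e ∘ (-g)`, which makes sense in any ring. -/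
def correlation (e : AddChar K S) (f g : H → K) (a : H) : S :=
  ∑ x, e (f (a * x) - g x)

theorem twistedSum_mul_twistedSum_inv_neg (χ : H →* Sˣ) (e : AddChar K S) (f g : H → K) :
    twistedSum χ e f * twistedSum χ⁻¹ e (-g) = ∑ a, χ a * correlation e f g a := by
  simp_rw [twistedSum, correlation, Finset.mul_sum]
  rw [Finset.sum_comm (s := Finset.univ) (t := Finset.univ)
    (f := fun a x ↦ (χ a : S) * e (f (a * x) - g x))]
  refine Finset.sum_congr rfl fun x _ ↦ ?_
  rw [Finset.sum_mul, ← Equiv.sum_comp (Equiv.mulRight x)]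
  refine Finset.sum_congr rfl fun a _ ↦ ?_
  have hχ : (χ x : S) * (χ⁻¹ x : Sˣ) = 1 := by simp
  simp only [Equiv.coe_mulRight, map_mul, Units.val_mul, sub_eq_add_neg, AddChar.map_add_eq_mul,
    Pi.neg_apply]
  linear_combination (χ a : S) * e (f (a * x)) * e (-g x) * hχ

theorem sum_correlation (e : AddChar K S) (f g : H → K) :
    ∑ a, correlation e f g a = twistedSum 1 e f * twistedSum 1 e (-g) := by
  simpa [inv_one (G := H →* Sˣ)] using (twistedSum_mul_twistedSum_inv_neg 1 e f g).symm

theorem map_twistedSum_eq_twistedSum_nsmul {σ : S →+* S} {χ : H →* Sˣ} {e : AddChar K S} {s : ℕ}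
    (hχ : ∀ h, σ (χ h) = χ h) (he : ∀ b, σ (e b) = e b ^ s) (f : H → K) :
    σ (twistedSum χ e f) = twistedSum χ e (s • f) := by
  simp [twistedSum, hχ, he, AddChar.map_nsmul_eq_pow]

theorem norm_map_correlation_le [Finite K] (φ : S →+* ℂ) (e : AddChar K S) (f g : H → K) (a : H) :
    ‖φ (correlation e f g a)‖ ≤ Fintype.card H := by
  rw [correlation, map_sum]
  refine (norm_sum_le _ _).trans_eq ?_
  have hnorm (b : K) : ‖φ (e b)‖ = 1 := ((φ : S →* ℂ).compAddChar e).norm_apply b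
  simp [hnorm]

end CharacterSums

/-- A function `f : H → K` is difference balanced if each difference function
`x ↦ f (a * x) - f x` with `a ≠ 1` takes every nonzero value `μ` times and the value `0`
`μ - 1` times; the field `card_mul` is the resulting count of the elements of `H`. -/
structure IsDifferenceBalanced {H K : Type*} [Group H] [AddGroup K] (f : H → K) (μ : ℕ) :
    Prop where
  card_mul : Nat.card K * μ = Nat.card H + 1
  card_sub_eq : ∀ a ≠ 1, ∀ b ≠ 0, Nat.card {x // f (a * x) - f x = b} = μ
  card_sub_eq_zero : ∀ a ≠ 1, Nat.card {x // f (a * x) - f x = 0} + 1 = μ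

namespace IsDifferenceBalanced

theorem coprime_card {H K : Type*} [Group H] [AddGroup K] {f : H → K} {μ : ℕ}
    (hf : IsDifferenceBalanced f μ) : (Nat.card K).Coprime (Nat.card H) :=
  Nat.Coprime.coprime_dvd_left (Dvd.intro μ hf.card_mul)
    (Nat.coprime_self_add_left.mpr (Nat.coprime_one_left _))

variable {H K S : Type*} [CommGroup H] [Fintype H] [AddCommGroup K] [Finite K] [CommRing S]
  [IsDomain S] {f : H → K} {μ : ℕ} {e : AddChar K S}

theorem correlation_self_eq_neg_one (hf : IsDifferenceBalanced f μ) (he : e ≠ 1) {a : H}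
    (ha : a ≠ 1) : correlation e f f a = -1 := by
  classical
  have := Fintype.ofFinite K
  have hcount (b : K) : (Finset.card {x | f (a * x) - f x = b} : S) =
      μ - if b = 0 then 1 else 0 := by
    rw [← Fintype.card_subtype, ← Nat.card_eq_fintype_card]
    split_ifs with hb
    · rw [← hf.card_sub_eq_zero a ha, hb]
      simp
    · rw [hf.card_sub_eq a ha b hb, sub_zero]
  rw [correlation, ← Finset.sum_fiberwise' Finset.univ (fun x ↦ f (a * x) - f x) e]
  simp_rw [Finset.sum_const, nsmul_eq_mul, hcount, sub_mul]
  rw [Finset.sum_sub_distrib, ← Finset.mul_sum, AddChar.sum_eq_zero_of_ne_one he]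
  simp

theorem twistedSum_mul_twistedSum_inv_neg_self (hf : IsDifferenceBalanced f μ) (he : e ≠ 1)
    (χ : H →* Sˣ) : twistedSum χ e f * twistedSum χ⁻¹ e (-f) =
      (Fintype.card H + 1 : ℕ) - ∑ a, (χ a : S) := by
  classical
  have hself : ∑ a ∈ Finset.univ.erase 1, (χ a : S) * correlation e f f a =
      -∑ a ∈ Finset.univ.erase 1, (χ a : S) := by
    rw [← Finset.sum_neg_distrib]
    refine Finset.sum_congr rfl fun a ha ↦ ?_
    rw [hf.correlation_self_eq_neg_one he (Finset.ne_of_mem_erase ha), mul_neg_one]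
  rw [twistedSum_mul_twistedSum_inv_neg, ← Finset.add_sum_erase _ _ (Finset.mem_univ 1), hself,
    ← Finset.add_sum_erase _ _ (Finset.mem_univ 1)]
  simp [correlation, add_sub_assoc]

theorem twistedSum_mul_twistedSum_inv_neg_self_of_ne_one (hf : IsDifferenceBalanced f μ)
    (he : e ≠ 1) {χ : H →* Sˣ} (hχ : χ ≠ 1) :
    twistedSum χ e f * twistedSum χ⁻¹ e (-f) = (Fintype.card H + 1 : ℕ) := by
  rw [hf.twistedSum_mul_twistedSum_inv_neg_self he, sum_monoidHom_units_eq_zero hχ, sub_zero]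

theorem twistedSum_one_mul_twistedSum_one_neg (hf : IsDifferenceBalanced f μ) (he : e ≠ 1) :
    twistedSum 1 e f * twistedSum 1 e (-f) = 1 := by
  simpa [inv_one (G := H →* Sˣ)] using hf.twistedSum_mul_twistedSum_inv_neg_self he 1

theorem norm_map_twistedSum_one (hf : IsDifferenceBalanced f μ) (he : e ≠ 1) (φ : S →+* ℂ) :
    ‖φ (twistedSum 1 e f)‖ = 1 := by
  have hconj : φ (twistedSum 1 e (-f)) = starRingEnd ℂ (φ (twistedSum 1 e f)) := by
    have hψ (b : K) : φ (e (-b)) = starRingEnd ℂ (φ (e b)) :=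
      ((φ : S →* ℂ).compAddChar e).map_neg_eq_conj b
    simp [twistedSum, hψ]
  have h := congrArg φ (hf.twistedSum_one_mul_twistedSum_one_neg he)
  rw [map_mul, hconj, Complex.mul_conj', map_one] at h
  exact (pow_eq_one_iff_of_nonneg (norm_nonneg _) two_ne_zero).mp (by exact_mod_cast h)

section Multiplier

variable {σ : S →+* S} {s : ℕ}

theorem norm_map_sum_correlation (hf : IsDifferenceBalanced f μ) (he : e ≠ 1)
    (hσe : ∀ b, σ (e b) = e b ^ s) (φ : S →+* ℂ) :
    ‖φ (∑ a, correlation e (s • f) f a)‖ = 1 := by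
  have hσ : ‖φ (twistedSum 1 e (s • f))‖ = 1 := by
    rw [← map_twistedSum_eq_twistedSum_nsmul (by simp) hσe]
    exact hf.norm_map_twistedSum_one he (φ.comp σ)
  have hneg : ‖φ (twistedSum 1 e (-f))‖ = 1 := by
    have h := congrArg (‖φ ·‖) (hf.twistedSum_one_mul_twistedSum_one_neg he)
    simpa [hf.norm_map_twistedSum_one he] using h
  rw [sum_correlation, map_mul, norm_mul, hσ, hneg, one_mul]

theorem dvd_correlation_add_sum_correlation [HasEnoughRootsOfUnity S (Monoid.exponent H)]
    (hf : IsDifferenceBalanced f μ) (he : e ≠ 1)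
    (hσH : ∀ x, x ^ Fintype.card H = 1 → σ x = x) (hσe : ∀ b, σ (e b) = e b ^ s)
    (hσ : ∀ x, x ∣ ((Fintype.card H + 1 : ℕ) : S) → x ∣ σ x) (a : H) :
    ((Fintype.card H + 1 : ℕ) : S) ∣
      correlation e (s • f) f a + ∑ b, correlation e (s • f) f b := by
  set η := ∑ b, correlation e (s • f) f b with hη
  have hcharSum (χ : H →* Sˣ) : ((Fintype.card H + 1 : ℕ) : S) ∣
      ∑ b, χ b * (correlation e (s • f) f b + η) := by
    simp_rw [mul_add, Finset.sum_add_distrib, ← Finset.sum_mul]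
    rcases eq_or_ne χ 1 with rfl | hχ
    · refine ⟨η, ?_⟩
      simp only [MonoidHom.one_apply, Units.val_one, one_mul, ← hη, Finset.sum_const,
        Finset.card_univ, nsmul_eq_mul, mul_one, Nat.cast_add, Nat.cast_one]
      ring
    · have hσχ (h : H) : σ (χ h) = χ h := by
        refine hσH _ ?_
        rw [← Units.val_pow_eq_pow_val, ← map_pow, pow_card_eq_one, map_one, Units.val_one]
      have hprod := hf.twistedSum_mul_twistedSum_inv_neg_self_of_ne_one he hχ
      rw [sum_monoidHom_units_eq_zero hχ, zero_mul, add_zero,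
        ← twistedSum_mul_twistedSum_inv_neg, ← map_twistedSum_eq_twistedSum_nsmul hσχ hσe, ← hprod]
      exact mul_dvd_mul_right (hσ _ (Dvd.intro _ hprod)) _
  have h := dvd_card_mul_of_forall_dvd_sum hcharSum a
  have hsplit : (Fintype.card H : S) * (correlation e (s • f) f a + η) =
      (Fintype.card H + 1 : ℕ) * (correlation e (s • f) f a + η) -
        (correlation e (s • f) f a + η) := by
    push_cast
    ring
  rw [hsplit] at h
  exact (dvd_sub_right (dvd_mul_right _ _)).mp h

theorem exists_correlation_add_sum_correlation_ne_zero
    (hf : IsDifferenceBalanced f μ) (he : e ≠ 1) (hσe : ∀ b, σ (e b) = e b ^ s) (φ : S →+* ℂ) :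
    ∃ a, correlation e (s • f) f a + ∑ b, correlation e (s • f) f b ≠ 0 := by
  have : CharZero S := φ.charZero
  by_contra! h
  have hsum : ((Fintype.card H + 1 : ℕ) : S) * ∑ b, correlation e (s • f) f b = 0 := by
    have h' := Finset.sum_eq_zero fun a (_ : a ∈ Finset.univ) ↦ h a
    rw [Finset.sum_add_distrib, Finset.sum_const, Finset.card_univ, nsmul_eq_mul] at h'
    push_cast
    linear_combination h'
  have hη := (mul_eq_zero.mp hsum).resolve_left (Nat.cast_ne_zero.mpr (Nat.succ_ne_zero _))
  simpa [hη] using hf.norm_map_sum_correlation he hσe φ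
end Multiplier

section RingOfIntegers

variable {E : Type*} [Field E] [NumberField E] {e : AddChar K (𝓞 E)} {σ : 𝓞 E →+* 𝓞 E} {s : ℕ}

theorem exists_forall_apply_nsmul_sub_eq
    [HasEnoughRootsOfUnity (𝓞 E) (Monoid.exponent H)] (hf : IsDifferenceBalanced f μ) (he : e ≠ 1)
    (hσH : ∀ x, x ^ Fintype.card H = 1 → σ x = x) (hσe : ∀ b, σ (e b) = e b ^ s)
    (hσ : ∀ x, x ∣ ((Fintype.card H + 1 : ℕ) : 𝓞 E) → x ∣ σ x) :
    ∃ a, ∃ η, ∀ x, e (s • f (a * x) - f x) = η := by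
  have ψ : E →+* ℂ := Classical.arbitrary _
  let φ : 𝓞 E →+* ℂ := ψ.comp (algebraMap (𝓞 E) E)
  have hφ : Function.Injective φ := ψ.injective.comp RingOfIntegers.coe_injective
  obtain ⟨a, ha⟩ := hf.exists_correlation_add_sum_correlation_ne_zero he hσe φ
  set η := ∑ b, correlation e (s • f) f b
  have hη (ψ : 𝓞 E →+* ℂ) : ‖ψ η‖ = 1 := hf.norm_map_sum_correlation he hσe ψ
  have hle (ψ : 𝓞 E →+* ℂ) :
      ‖ψ (correlation e (s • f) f a + η)‖ ≤ (Fintype.card H + 1 : ℕ) := by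
    rw [map_add, Nat.cast_add_one]
    exact (norm_add_le _ _).trans (add_le_add (norm_map_correlation_le ψ e (s • f) f a) (hη ψ).le)
  have hnorm := norm_map_eq_of_dvd_of_forall_norm_map_le ha
    (hf.dvd_correlation_add_sum_correlation he hσH hσe hσ a) hle φ
  refine ⟨a, η, fun x ↦ hφ (forall_eq_of_card_add_one_le_norm_add_sum
    (u := fun x ↦ φ (e (s • f (a * x) - f x))) (fun x ↦ ?_) (hη φ) ?_ x)⟩
  · exact ((φ : 𝓞 E →* ℂ).compAddChar e).norm_apply _
  · rw [← map_sum, ← map_add, add_comm η, ← Nat.cast_add_one]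
    exact hnorm.ge

end RingOfIntegers

end IsDifferenceBalanced

section DifferenceBalanced

variable {H K : Type*} [CommGroup H] [Finite H] [AddCommGroup K] [Finite K] [IsAddCyclic K]
  {f : H → K} {μ s : ℕ}

theorem IsDifferenceBalanced.exists_forall_nsmul_apply_mul_eq_add_of_isCyclotomicExtension
    [Nontrivial K] {E : Type*} [Field E] [NumberField E] (hf : IsDifferenceBalanced f μ)
    {p r m : ℕ} (hp : p.Prime) (hK : Nat.card K = p ^ r) (hH : Nat.card H + 1 = p ^ m)
    [NeZero (p ^ r * Nat.card H)] [IsCyclotomicExtension {p ^ r * Nat.card H} ℚ E]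
    (hs : s.Coprime (Nat.card K)) : ∃ a c, ∀ x, s • f (a * x) = f x + c := by
  have := Fintype.ofFinite H
  have : HasEnoughRootsOfUnity (𝓞 E) (Monoid.exponent H) :=
    hasEnoughRootsOfUnity_ringOfIntegers
      (Group.exponent_dvd_nat_card.trans (Nat.dvd_mul_left _ (p ^ r)))
  have : HasEnoughRootsOfUnity (𝓞 E) (Nat.card K) :=
    hasEnoughRootsOfUnity_ringOfIntegers (hK.dvd.trans (Nat.dvd_mul_right _ (Nat.card H)))
  obtain ⟨e, he⟩ := exists_addChar_injective (K := K) (S := 𝓞 E)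
  have he_ne_one : e ≠ 1 := by
    rintro rfl
    obtain ⟨b, hb⟩ := exists_ne (0 : K)
    exact hb (he rfl)
  have he_pow (b : K) : e b ^ p ^ r = 1 := by
    rw [← AddChar.map_nsmul_eq_pow, ← hK, card_nsmul_eq_zero', AddChar.map_zero_eq_one]
  obtain ⟨σ, hσK, hσH⟩ :=
    exists_ringHom_apply_eq_pow_and_apply_eq_self (E := E) (A := p ^ r) (hK ▸ hf.coprime_card)
      (hK ▸ hs)
  have hσ (x : 𝓞 E) (hx : x ∣ ((Fintype.card H + 1 : ℕ) : 𝓞 E)) : x ∣ σ x := by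
    rw [← Nat.card_eq_fintype_card, hH, Nat.cast_pow] at hx
    exact dvd_map_of_dvd_prime_pow_of_apply_eq_self (r := r) hp hσH hx
  obtain ⟨a, η, hη⟩ := hf.exists_forall_apply_nsmul_sub_eq he_ne_one
    (fun x hx ↦ hσH x (by rwa [Nat.card_eq_fintype_card])) (fun b ↦ hσK _ (he_pow b)) hσ
  refine ⟨a, s • f (a * 1) - f 1, fun x ↦ ?_⟩
  rw [← he ((hη x).trans (hη 1).symm), add_sub_cancel]

theorem IsDifferenceBalanced.exists_forall_nsmul_apply_mul_eq_add
    (hf : IsDifferenceBalanced f μ) (hH : IsPrimePow (Nat.card H + 1))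
    (hs : s.Coprime (Nat.card K)) : ∃ a c, ∀ x, s • f (a * x) = f x + c := by
  rcases subsingleton_or_nontrivial K with _ | _
  · exact ⟨1, 0, fun x ↦ Subsingleton.elim _ _⟩
  obtain ⟨p, m, hp, -, hm⟩ := (isPrimePow_nat_iff _).mp hH
  obtain ⟨r, -, hr⟩ := (Nat.dvd_prime_pow hp).mp (hm ▸ Dvd.intro μ hf.card_mul)
  have : NeZero (p ^ r * Nat.card H) :=
    ⟨mul_ne_zero (pow_ne_zero r hp.ne_zero) Nat.card_pos.ne'⟩
  let E := CyclotomicField (p ^ r * Nat.card H) ℚ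
  have : IsCyclotomicExtension {p ^ r * Nat.card H} ℚ E :=
    CyclotomicField.isCyclotomicExtension _ ℚ
  have : NumberField E := IsCyclotomicExtension.numberField {p ^ r * Nat.card H} ℚ E
  exact hf.exists_forall_nsmul_apply_mul_eq_add_of_isCyclotomicExtension (E := E) hp hr hm.symm hs

end DifferenceBalanced

section GeneralizedDifferenceSet

variable {H K : Type*} [Group H] [AddGroup K]

/-- The number of representations of `(a, b)` as a difference of two distinct elements of a subset
of `H × K`, with `H` written multiplicatively and `K` additively: `gdsCount` for arbitrary
groups. -/
noncomputable def differenceCount (D : Set (H × K)) (a : H) (b : K) : ℕ :=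
  Nat.card {pq : (H × K) × (H × K) //
    pq.1 ∈ D ∧ pq.2 ∈ D ∧ pq.1 ≠ pq.2 ∧ pq.1.1 * pq.2.1⁻¹ = a ∧ pq.1.2 - pq.2.2 = b}

theorem differenceCount_graph (f : H → K) {a : H} (ha : a ≠ 1) (b : K) :
    differenceCount {d | f d.1 = d.2} a b = Nat.card {x // f (a * x) - f x = b} := by
  refine (Nat.card_congr (Equiv.ofBijective
    (fun x ↦ ⟨((a * x, f (a * x)), (x, f x)), rfl, rfl, by simp [ha], by simp, x.2⟩)
    ⟨fun x x' h ↦ ?_, ?_⟩)).symm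
  · simp_all [Subtype.ext_iff]
  · rintro ⟨⟨⟨x₁, y₁⟩, ⟨x₂, y₂⟩⟩, (h₁ : f x₁ = y₁), (h₂ : f x₂ = y₂), -, h₃, h₄⟩
    obtain rfl : x₁ = a * x₂ := mul_inv_eq_iff_eq_mul.mp h₃
    subst h₁ h₂
    exact ⟨⟨x₂, h₄⟩, rfl⟩

theorem exists_eq_graph_of_differenceCount_one_eq_zero [Finite H] [Finite K] {D : Set (H × K)}
    (hcard : Nat.card D = Nat.card H) (hD : ∀ b ≠ 0, differenceCount D 1 b = 0) :
    ∃ f : H → K, D = {d | f d.1 = d.2} := by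
  have hinj : Function.Injective fun d : D ↦ d.1.1 := by
    rintro ⟨⟨x, y⟩, hd⟩ ⟨⟨x', y'⟩, hd'⟩ (rfl : x = x')
    by_contra h
    have hy : y ≠ y' := by simpa using h
    have hempty := (Nat.card_eq_zero.mp (hD _ (sub_ne_zero.mpr hy))).resolve_right
      (not_infinite_iff_finite.mpr inferInstance)
    exact hempty.false ⟨((x, y), (x, y')), hd, hd', by simp [hy], by simp, rfl⟩
  let ε := Equiv.ofBijective _ ((Nat.bijective_iff_injective_and_card _).mpr ⟨hinj, hcard⟩)
  refine ⟨fun x ↦ (ε.symm x).1.2, Set.ext fun d ↦ ⟨fun hd ↦ ?_, fun (hd : _ = d.2) ↦ ?_⟩⟩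
  · have h : ε.symm d.1 = ⟨d, hd⟩ := ε.symm_apply_eq.mpr rfl
    simp [h]
  · have h : (ε.symm d.1).1 = d := Prod.ext (ε.apply_symm_apply d.1) hd
    exact h ▸ (ε.symm d.1).2

theorem isDifferenceBalanced_of_differenceCount_graph {f : H → K} {μ : ℕ}
    (hμ : Nat.card K * μ = Nat.card H + 1)
    (h : ∀ a b, a ≠ 1 → b ≠ 0 → differenceCount {d | f d.1 = d.2} a b = μ)
    (h₀ : ∀ a ≠ 1, differenceCount {d | f d.1 = d.2} a 0 = μ - 1) :
    IsDifferenceBalanced f μ where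
  card_mul := hμ
  card_sub_eq a ha b hb := by rw [← differenceCount_graph f ha, h a b ha hb]
  card_sub_eq_zero a ha := by
    have hμ_pos : 1 ≤ μ := Nat.pos_of_ne_zero fun h0 ↦ by simp [h0] at hμ
    rw [← differenceCount_graph f ha, h₀ a ha, Nat.sub_add_cancel hμ_pos]

end GeneralizedDifferenceSet

theorem image_graph_nsmul_eq_image_graph_mul_add {H K : Type*} [Group H] [AddMonoid K]
    {f : H → K} {t : ℕ} {a : H} {c : K} (h : ∀ x, t • f (a * x) = f x + c) :
    (fun d : H × K ↦ (d.1, t • d.2)) '' {d | f d.1 = d.2} =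
      (fun d : H × K ↦ (a * d.1, d.2 + c)) '' {d | f d.1 = d.2} := by
  refine Set.ext fun d ↦ ⟨?_, ?_⟩
  · rintro ⟨⟨x, y⟩, (rfl : f x = y), rfl⟩
    exact ⟨(a⁻¹ * x, f (a⁻¹ * x)), rfl, by simp [← h]⟩
  · rintro ⟨⟨x, y⟩, (rfl : f x = y), rfl⟩
    exact ⟨(a * x, f (a * x)), rfl, by simp [h]⟩

theorem coprime_add_mul_pow_sub_one {p n i : ℕ} (hp : p.Prime) (hn : n ≠ 0) (hi : 0 < i)
    (hip : i < p) : (p + i * (p ^ n - 1)).Coprime p := by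
  rw [Nat.coprime_self_add_left]
  refine Nat.Coprime.mul_left (Nat.coprime_of_lt_prime hi.ne' hip hp).symm ?_
  refine Nat.Coprime.coprime_dvd_right (dvd_pow_self p hn) ?_
  exact (Nat.coprime_self_sub_left (Nat.one_le_pow _ _ hp.pos)).mpr (Nat.coprime_one_left _)

theorem stmt_11_general {H K : Type*} [CommGroup H] [Finite H] [AddCommGroup K] [Finite K]
    [IsAddCyclic K] {μ : ℕ} (hH : IsPrimePow (Nat.card H + 1))
    (hμ : Nat.card K * μ = Nat.card H + 1) (D : Set (H × K)) (hcard : Nat.card D = Nat.card H)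
    (hlam : ∀ a b, a ≠ 1 → b ≠ 0 → differenceCount D a b = μ)
    (hK : ∀ b ≠ 0, differenceCount D 1 b = 0)
    (hH₀ : ∀ a ≠ 1, differenceCount D a 0 = μ - 1) {t : ℕ} (ht : t.Coprime (Nat.card K)) :
    ∃ a : H, ∃ c : K,
      (fun d : H × K ↦ (d.1, t • d.2)) '' D = (fun d : H × K ↦ (a * d.1, d.2 + c)) '' D := by
  obtain ⟨f, rfl⟩ := exists_eq_graph_of_differenceCount_one_eq_zero hcard hK
  have hf : IsDifferenceBalanced f μ := isDifferenceBalanced_of_differenceCount_graph hμ hlam hH₀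
  obtain ⟨a, c, hac⟩ := hf.exists_forall_nsmul_apply_mul_eq_add hH ht
  exact ⟨a, c, image_graph_nsmul_eq_image_graph_mul_add hac⟩

/-- If `D` is a generalized difference set with parameters
`(p(pⁿ−1); p, pⁿ−1; pⁿ−1, p^{n−1}; 0, p^{n−1}−1)` in `G = L^× × K` relative to
`N₁ = {1} × K` and `N₂ = L^× × {0}`, then every `(1, tᵢ)` with
`tᵢ = p + i(pⁿ−1)`, `1 ≤ i ≤ p−1`, is a numerical multiplier of `D`. -/
theorem stmt_11 {K L : Type*} [Field K] [Field L] [Fintype K] [Fintype L]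
    (p n : ℕ) (hp : p.Prime) (hodd : Odd p) (hn : 1 ≤ n)
    (hK : Fintype.card K = p) (hL : Fintype.card L = p ^ n)
    (D : Set (Lˣ × K))
    (hcard : Nat.card D = p ^ n - 1)
    (hlam : ∀ a : Lˣ, ∀ b : K, a ≠ 1 → b ≠ 0 → gdsCount D a b = p ^ (n - 1))
    (hN₁ : ∀ b : K, b ≠ 0 → gdsCount D 1 b = 0)
    (hN₂ : ∀ a : Lˣ, a ≠ 1 → gdsCount D a 0 = p ^ (n - 1) - 1) :
    ∀ i : ℕ, 1 ≤ i → i ≤ p - 1 →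
      ∃ a : Lˣ, ∃ c : K,
        (fun d : Lˣ × K => (d.1, (p + i * (p ^ n - 1)) • d.2)) '' D =
          (fun d : Lˣ × K => (a * d.1, d.2 + c)) '' D := by
  intro i hi hip
  have : Fact p.Prime := ⟨hp⟩
  have hKp : Nat.card K = p := Nat.card_eq_fintype_card.trans hK
  have : IsAddCyclic K := isAddCyclic_of_prime_card hKp
  have hunits : Nat.card Lˣ = p ^ n - 1 := by
    rw [Nat.card_units, Nat.card_eq_fintype_card, hL]
  have hunits_add_one : Nat.card Lˣ + 1 = p ^ n := by
    rw [hunits, Nat.sub_add_cancel (Nat.one_le_pow _ _ hp.pos)]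
  have hn0 : n ≠ 0 := Nat.one_le_iff_ne_zero.mp hn
  refine stmt_11_general (hunits_add_one ▸ hp.isPrimePow.pow hn0) ?_ D (hcard.trans hunits.symm)
    hlam hN₁ hN₂ ?_
  · rw [hKp, hunits_add_one, mul_pow_sub_one hn0]
  · rw [hKp]
    exact coprime_add_mul_pow_sub_one hp hn0 hi (by have := hp.pos; lia)
end

section
/- Let p be an odd prime and n ≥ 1. Let L be a finite field with |L| = p^n and K = 𝔽_p. Suppose f : L∖{0} → K is surjective onto K and difference balanced. Then the following are equivalent: (a) for every t ∈ K∖{0} there exists a ∈ L∖{0} such that {(x, t·f(x)) : x ∈ L∖{0}} = {(a·x, f(x)) : x ∈ L∖{0}} as subsets of L × K (i.e., the pairs (1,t), t ∈ K∖{0}, are multipliers of the graph D = {(x, f(x))} with D^{(1,t)} = (a,0)D); (b) f is d-homogeneous, i.e., there exists an integer d with gcd(d, p−1) = 1 such that f(cx) = c^d f(x) for all x ∈ L∖{0} and all c ∈ K∖{0}. -/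
/-! The pairs `(a, t)` with `f (a * x) = t * f x` for all `x ≠ 0` form a subgroup `Γ` of
`Lˣ × Kˣ`. If `f` is not identically zero, then `a` determines `t`; if `f` has no nontrivial
multiplicative period, as is the case for difference balanced functions, then `t` determines `a`.
Condition (a) says that `Γ` projects onto `Kˣ`, in which case `Γ` has `|K| - 1` elements. Its
projection to `Lˣ` is then a subgroup of order `|K| - 1`, and the only such subgroup is `Kˣ`. So `Γ`
is the graph of an automorphism of the cyclic group `Kˣ`, which is a power map `c ↦ c ^ d`. -/

section Groups

theorem range_eq_rootsOfUnity_natCard_of_injective {G R : Type*} [Group G] [Finite G]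
    [CommRing R] [IsDomain R] {φ : G →* Rˣ} (hφ : Function.Injective φ) :
    φ.range = rootsOfUnity (Nat.card G) R := by
  have : NeZero (Nat.card G) := ⟨Nat.card_pos.ne'⟩
  have hle : φ.range ≤ rootsOfUnity (Nat.card G) R := by
    rintro _ ⟨g, rfl⟩
    rw [mem_rootsOfUnity, ← map_pow, pow_card_eq_one', map_one]
  refine Subgroup.eq_of_le_of_card_ge hle ?_
  rw [← Nat.card_congr (MonoidHom.ofInjective hφ).toEquiv]
  exact card_rootsOfUnity R _

theorem exists_coprime_forall_mulAut_apply_eq_pow {G : Type*} [Group G] [Finite G] [IsCyclic G]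
    (e : MulAut G) : ∃ d : ℕ, d.Coprime (Nat.card G) ∧ ∀ g, e g = g ^ d := by
  have : NeZero (Nat.card G) := ⟨Nat.card_pos.ne'⟩
  let χ := MulDistribMulAction.toMonoidHomZModOfIsCyclic G (MulAut G) rfl
  let u : (ZMod (Nat.card G))ˣ := Units.map χ (toUnits e)
  refine ⟨(u : ZMod (Nat.card G)).val, ZMod.val_coe_unit_coprime u, fun g => ?_⟩
  have hχ : χ e = ((u : ZMod (Nat.card G)).val : ℤ) := by simp [u]
  rw [← MulAut.smul_def, MulDistribMulAction.toMonoidHomZModOfIsCyclic_apply rfl e g _ hχ,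
    zpow_natCast]

end Groups

section Scaling

variable {K L : Type*} [GroupWithZero L]

/-- A function on `L∖{0}` is multiplicatively aperiodic if its only multiplicative period is `1`.
Functions on `L∖{0}` are encoded as functions on `L` whose value at `0` is disregarded. -/
def IsMulAperiodic (f : L → K) : Prop :=
  ∀ u : Lˣ, (∀ x, x ≠ 0 → f (u * x) = f x) → u = 1

/-- The group of pairs `(a, t)` for which the dilation of `L∖{0}` by `a` multiplies the values of
`f` by `t`. -/
def scalingSubgroup [Monoid K] (f : L → K) : Subgroup (Lˣ × Kˣ) where
  carrier := {s | ∀ x, x ≠ 0 → f (s.1 * x) = s.2 * f x}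
  one_mem' := by simp
  mul_mem' {r s} hr hs x hx := by
    simp only [Prod.fst_mul, Prod.snd_mul, Units.val_mul, mul_assoc]
    rw [hr _ (mul_ne_zero s.1.ne_zero hx), hs x hx]
  inv_mem' {s} hs x hx := by
    rw [Prod.fst_inv, Prod.snd_inv, Units.eq_inv_mul_iff_mul_eq,
      ← hs _ (mul_ne_zero s.1⁻¹.ne_zero hx), Units.mul_inv_cancel_left]

theorem mem_scalingSubgroup [Monoid K] {f : L → K} {a : Lˣ} {t : Kˣ} :
    (a, t) ∈ scalingSubgroup f ↔ ∀ x, x ≠ 0 → f (a * x) = t * f x :=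
  Iff.rfl

theorem IsMulAperiodic.injOn_snd_scalingSubgroup [Monoid K] {f : L → K} (hf : IsMulAperiodic f) :
    Set.InjOn Prod.snd (scalingSubgroup f : Set (Lˣ × Kˣ)) := by
  rintro ⟨a, t⟩ ha ⟨b, _⟩ hb rfl
  have hdiv : (a / b, 1) ∈ scalingSubgroup f := by simpa using div_mem ha hb
  have hab : a / b = 1 := hf _ (by simpa using mem_scalingSubgroup.mp hdiv)
  rw [div_eq_one.mp hab]

theorem injOn_fst_scalingSubgroup [MonoidWithZero K] [IsRightCancelMulZero K] {f : L → K}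
    (hf : ∃ x, x ≠ 0 ∧ f x ≠ 0) : Set.InjOn Prod.fst (scalingSubgroup f : Set (Lˣ × Kˣ)) := by
  obtain ⟨x, hx, hfx⟩ := hf
  rintro ⟨a, s⟩ hs ⟨_, t⟩ ht rfl
  have hst : s = t := Units.ext <| mul_right_cancel₀ hfx <| (hs x hx).symm.trans (ht x hx)
  rw [hst]

theorem graph_eq_translate_iff [Monoid K] (f : L → K) (a : Lˣ) (t : Kˣ) :
    {pr : L × K | ∃ x : L, x ≠ 0 ∧ pr = (x, t * f x)} =
        {pr : L × K | ∃ x : L, x ≠ 0 ∧ pr = (a * x, f x)} ↔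
      (a⁻¹, t) ∈ scalingSubgroup f := by
  rw [mem_scalingSubgroup]
  constructor
  · intro h x hx
    obtain ⟨y, -, hy⟩ := h.subset ⟨x, hx, rfl⟩
    obtain ⟨rfl, hfy⟩ := Prod.mk.inj hy
    rw [hfy, Units.inv_mul_cancel_left]
  · intro h
    ext ⟨x, k⟩
    simp only [Set.mem_ofPred_eq, Prod.mk.injEq]
    constructor
    · rintro ⟨y, hy, rfl, rfl⟩
      exact ⟨a⁻¹ * x, by simp [hy], by simp, (h x hy).symm⟩
    · rintro ⟨y, hy, rfl, rfl⟩
      refine ⟨a * y, by simp [hy], rfl, ?_⟩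
      rw [← h _ (by simp [hy]), Units.inv_mul_cancel_left]

theorem forall_exists_graph_eq_translate_iff [GroupWithZero K] (f : L → K) :
    (∀ t : K, t ≠ 0 → ∃ a : L, a ≠ 0 ∧
        {pr : L × K | ∃ x : L, x ≠ 0 ∧ pr = (x, t * f x)} =
          {pr : L × K | ∃ x : L, x ≠ 0 ∧ pr = (a * x, f x)}) ↔
      ∀ t : Kˣ, ∃ a : Lˣ, (a, t) ∈ scalingSubgroup f := by
  constructor
  · intro h t
    obtain ⟨a, ha, hgraph⟩ := h t t.ne_zero
    exact ⟨(Units.mk0 a ha)⁻¹, (graph_eq_translate_iff f (Units.mk0 a ha) t).mp hgraph⟩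
  · intro h t ht
    obtain ⟨a, ha⟩ := h (Units.mk0 t ht)
    exact ⟨↑a⁻¹, a⁻¹.ne_zero,
      (graph_eq_translate_iff f a⁻¹ (Units.mk0 t ht)).mpr (by rwa [inv_inv])⟩

end Scaling

section FieldExtension

variable {K L : Type*} [Field K] [Field L] {f : L → K}

theorem IsDiffBalanced.isMulAperiodic {q n : ℕ} (hf : IsDiffBalanced q n f) (hq : q ≠ 0) :
    IsMulAperiodic f := by
  intro u hperiod
  by_contra hu
  have hcard := (hf u u.ne_zero (by simpa using hu)).2 1 one_ne_zero
  have hempty : {x : L | x ≠ 0 ∧ f (u * x) - f x = 1} = ∅ := by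
    ext x
    simp +contextual [hperiod]
  rw [hempty] at hcard
  exact pow_ne_zero _ hq (by simpa using hcard.symm)

variable [Algebra K L]

theorem isDHomogeneous_iff_mem_scalingSubgroup {q d : ℕ} :
    IsDHomogeneous q d f ↔ d.Coprime (q - 1) ∧
      ∀ c : Kˣ, (Units.map (algebraMap K L) c, c ^ d) ∈ scalingSubgroup f := by
  refine and_congr_right fun _ => ⟨fun h c x hx => ?_, fun h c hc x hx => ?_⟩
  · simpa using h c c.ne_zero x hx
  · simpa using h (Units.mk0 c hc) x hx

theorem IsMulAperiodic.map_fst_scalingSubgroup_eq_range [Finite K] (hf : IsMulAperiodic f)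
    (hf₀ : ∃ x, x ≠ 0 ∧ f x ≠ 0) (h : ∀ t : Kˣ, ∃ a : Lˣ, (a, t) ∈ scalingSubgroup f) :
    (scalingSubgroup f).map (MonoidHom.fst Lˣ Kˣ) =
      (Units.map (algebraMap K L : K →* L)).range := by
  let π₁ := (MonoidHom.fst Lˣ Kˣ).comp (scalingSubgroup f).subtype
  let π₂ := (MonoidHom.snd Lˣ Kˣ).comp (scalingSubgroup f).subtype
  have hπ₁ : Function.Injective π₁ := (injOn_fst_scalingSubgroup hf₀).injective
  have hπ₂ : Function.Bijective π₂ :=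
    ⟨hf.injOn_snd_scalingSubgroup.injective, fun t => let ⟨a, ha⟩ := h t; ⟨⟨(a, t), ha⟩, rfl⟩⟩
  have : Finite (scalingSubgroup f) := Finite.of_injective π₂ hπ₂.injective
  have hπ₁_range : π₁.range = (scalingSubgroup f).map (MonoidHom.fst Lˣ Kˣ) := by
    rw [MonoidHom.range_comp, Subgroup.range_subtype]
  have hunits : (Units.map (algebraMap K L : K →* L)).range = rootsOfUnity (Nat.card Kˣ) L :=
    range_eq_rootsOfUnity_natCard_of_injective (Units.map_injective (algebraMap K L).injective)
  rw [← hπ₁_range, hunits, range_eq_rootsOfUnity_natCard_of_injective hπ₁,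
    Nat.card_eq_of_bijective π₂ hπ₂]

theorem IsMulAperiodic.exists_mulAut_mem_scalingSubgroup [Finite K] (hf : IsMulAperiodic f)
    (hf₀ : ∃ x, x ≠ 0 ∧ f x ≠ 0) (h : ∀ t : Kˣ, ∃ a : Lˣ, (a, t) ∈ scalingSubgroup f) :
    ∃ e : MulAut Kˣ, ∀ c, (Units.map (algebraMap K L) c, e c) ∈ scalingSubgroup f := by
  let ι : Kˣ →* Lˣ := Units.map (algebraMap K L)
  have hι : Function.Injective ι := Units.map_injective (algebraMap K L).injective
  have hrange : (scalingSubgroup f).map (MonoidHom.fst Lˣ Kˣ) = ι.range :=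
    hf.map_fst_scalingSubgroup_eq_range hf₀ h
  let Γ : Subgroup (Kˣ × Kˣ) := (scalingSubgroup f).comap (ι.prodMap (MonoidHom.id Kˣ))
  have hfst : Function.Bijective (Prod.fst ∘ Γ.subtype) := by
    constructor
    · rintro ⟨⟨c, s⟩, hs⟩ ⟨⟨_, t⟩, ht⟩ rfl
      have hst : s = t := congrArg Prod.snd (injOn_fst_scalingSubgroup hf₀ hs ht rfl)
      exact Subtype.ext (Prod.ext rfl hst)
    · intro c
      obtain ⟨⟨_, t⟩, ht, rfl⟩ := hrange.ge ⟨c, rfl⟩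
      exact ⟨⟨(c, t), ht⟩, rfl⟩
  have hsnd : Function.Bijective (Prod.snd ∘ Γ.subtype) := by
    constructor
    · rintro ⟨⟨b, t⟩, hb⟩ ⟨⟨c, _⟩, hc⟩ rfl
      have hbc : b = c := hι (congrArg Prod.fst (hf.injOn_snd_scalingSubgroup hb hc rfl))
      exact Subtype.ext (Prod.ext hbc rfl)
    · intro t
      obtain ⟨_, ha⟩ := h t
      obtain ⟨c, rfl⟩ := hrange.le ⟨_, ha, rfl⟩
      exact ⟨⟨(c, t), ha⟩, rfl⟩
  obtain ⟨e, he⟩ := Subgroup.exists_mulEquiv_eq_graph hfst hsnd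
  exact ⟨e, fun c => (he ▸ rfl : (c, e c) ∈ Γ)⟩

variable [Fintype K]

theorem IsMulAperiodic.exists_isDHomogeneous (hf : IsMulAperiodic f)
    (h : ∀ t : Kˣ, ∃ a : Lˣ, (a, t) ∈ scalingSubgroup f) :
    ∃ d, IsDHomogeneous (Fintype.card K) d f := by
  by_cases hf₀ : ∃ x, x ≠ 0 ∧ f x ≠ 0
  · obtain ⟨e, he⟩ := hf.exists_mulAut_mem_scalingSubgroup hf₀ h
    obtain ⟨d, hd, hpow⟩ := exists_coprime_forall_mulAut_apply_eq_pow e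
    rw [Nat.card_units, Nat.card_eq_fintype_card] at hd
    exact ⟨d, isDHomogeneous_iff_mem_scalingSubgroup.mpr ⟨hd, fun c => hpow c ▸ he c⟩⟩
  · push Not at hf₀
    refine ⟨1, Nat.coprime_one_left _, fun c hc x hx => ?_⟩
    rw [hf₀ x hx, hf₀ _ (mul_ne_zero (by simpa using hc) hx), mul_zero]

theorem IsDHomogeneous.exists_mem_scalingSubgroup {d : ℕ}
    (hf : IsDHomogeneous (Fintype.card K) d f) (t : Kˣ) :
    ∃ a : Lˣ, (a, t) ∈ scalingSubgroup f := by
  obtain ⟨hd, hmem⟩ := isDHomogeneous_iff_mem_scalingSubgroup.mp hf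
  have hcoprime : (Nat.card Kˣ).Coprime d := by
    rw [Nat.card_units, Nat.card_eq_fintype_card]
    exact hd.symm
  obtain ⟨c, rfl⟩ := hcoprime.pow_left_bijective.surjective t
  exact ⟨_, hmem c⟩

end FieldExtension

theorem stmt_12_general {K L : Type*} [Field K] [Field L] [Algebra K L] [Fintype K]
    (f : L → K) (hf : IsMulAperiodic f) :
    (∀ t : K, t ≠ 0 → ∃ a : L, a ≠ 0 ∧
        {pr : L × K | ∃ x : L, x ≠ 0 ∧ pr = (x, t * f x)} =
          {pr : L × K | ∃ x : L, x ≠ 0 ∧ pr = (a * x, f x)}) ↔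
      ∃ d : ℕ, IsDHomogeneous (Fintype.card K) d f := by
  rw [forall_exists_graph_eq_translate_iff]
  exact ⟨hf.exists_isDHomogeneous,
    fun ⟨_, hd⟩ => hd.exists_mem_scalingSubgroup⟩

/-- For a surjective difference balanced function `f : L∖{0} → 𝔽_p`, the multiplier
property of the graph of `f` (every `(1,t)`, `t ∈ K∖{0}`, is a multiplier with
translate `(a,0)`) is equivalent to `f` being `d`-homogeneous. -/
theorem stmt_12 {K L : Type*} [Field K] [Field L] [Algebra K L] [Fintype K] [Fintype L]
    (p n : ℕ) (hp : p.Prime) (hodd : Odd p) (hn : 1 ≤ n)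
    (hK : Fintype.card K = p) (hL : Fintype.card L = p ^ n)
    (f : L → K) (hsurj : ∀ b : K, ∃ x : L, x ≠ 0 ∧ f x = b)
    (hf : IsDiffBalanced p n f) :
    (∀ t : K, t ≠ 0 → ∃ a : L, a ≠ 0 ∧
        {pr : L × K | ∃ x : L, x ≠ 0 ∧ pr = (x, t * f x)} =
          {pr : L × K | ∃ x : L, x ≠ 0 ∧ pr = (a * x, f x)}) ↔
      (∃ d : ℕ, IsDHomogeneous p d f) := by
  subst hK
  exact stmt_12_general f (hf.isMulAperiodic Fintype.card_ne_zero)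
end
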